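/- Assume the Gaussian-basis model: fix v ∈ ℝ^N, let Y ∈ ℝ^{N×n} have first column v and remaining n−1 columns i.i.d. N(0, (1/N) I_N), let Q ∈ ℝ^{n×n} be an arbitrary orthogonal matrix, and observe Ỹ = YQ. Let ỹ_iᵀ be the i-th row of Ỹ, define M̃ := Σ_{i=1}^N (‖ỹ_i‖² − (n−1)/N) ỹ_i ỹ_iᵀ − (3/N) I_n, and let ũ be the unit leading eigenvector of M̃ (the eigenvector whose eigenvalue has largest magnitude). There exists a universal constant C > 0 such that for any δ ∈ (0,1) with N ≥ log⁷(N/δ): defining η as in the spectral-norm proposition, with probability at least 1−δ there is a choice of sign s ∈ {±1} with ‖s·Ỹũ − v‖ ≤ C·η·(‖v‖+1)/|‖v‖₄⁴ − 3/N|. -/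

import Mathlib

open MeasureTheory ProbabilityTheory Matrix

/-- Euclidean norm of a vector in `ℝ^k`. -/
noncomputable def eucNorm {k : ℕ} (v : Fin k → ℝ) : ℝ := Real.sqrt (∑ i, (v i) ^ 2)

/-- ℓ_p norm of a vector in `ℝ^k`. -/
noncomputable def lpNorm {k : ℕ} (p : ℝ) (v : Fin k → ℝ) : ℝ := (∑ i, |v i| ^ p) ^ (1 / p)

/-- Supremum (ℓ_∞) norm of a vector in `ℝ^k`. -/
noncomputable def supNorm {k : ℕ} (v : Fin k → ℝ) : ℝ := ⨆ i, |v i|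

/-- The Gaussian measure `N(0, σ2 · I_k)` on `ℝ^k`. -/
noncomputable def gaussVec (k : ℕ) (σ2 : NNReal) : Measure (Fin k → ℝ) :=
  Measure.pi fun _ => gaussianReal 0 σ2

instance (k : ℕ) (σ2 : NNReal) : IsProbabilityMeasure (gaussVec k σ2) := by
  unfold gaussVec; infer_instance

/-- The law of `N` i.i.d. samples from `N(0, σ2 · I_k)`. -/
noncomputable def iidGaussVec (N k : ℕ) (σ2 : NNReal) : Measure (Fin N → Fin k → ℝ) :=
  Measure.pi fun _ => gaussVec k σ2

/-- Concatenation `(a, bᵀ)ᵀ ∈ ℝ^n` of a scalar `a` with a vector `b ∈ ℝ^{n-1}`. -/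
noncomputable def rowCat {n : ℕ} (a : ℝ) (b : Fin (n - 1) → ℝ) : Fin n → ℝ :=
  fun j => if h : (j : ℕ) = 0 then a else b ⟨(j : ℕ) - 1, by have := j.isLt; omega⟩

/-- The `N × n` matrix whose rows are `y_iᵀ = (v_i, b_iᵀ)`, i.e. whose first column is `v`
and whose remaining `n - 1` columns are given by `B`. -/
noncomputable def gaussBasis {N n : ℕ} (v : Fin N → ℝ) (B : Fin N → Fin (n - 1) → ℝ) :
    Matrix (Fin N) (Fin n) ℝ :=
  Matrix.of fun i => rowCat (v i) (B i)

/-- The matrix `M(Y) = ∑_i (‖y_i‖² - (n-1)/N) y_i y_iᵀ - (3/N) I_n` built from the rows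
`y_iᵀ` of `Y`. -/
noncomputable def specMat {N n : ℕ} (Y : Matrix (Fin N) (Fin n) ℝ) :
    Matrix (Fin n) (Fin n) ℝ :=
  (∑ i, ((∑ j, (Y i j) ^ 2) - ((n : ℝ) - 1) / N) • Matrix.vecMulVec (Y i) (Y i))
    - ((3 : ℝ) / N) • (1 : Matrix (Fin n) (Fin n) ℝ)

/-- `u` is a unit leading eigenvector of the (symmetric) matrix `M`: a unit eigenvector
whose eigenvalue has the largest absolute value among all eigenvalues of `M`. -/
def IsLeadingEigen {n : ℕ} (M : Matrix (Fin n) (Fin n) ℝ) (u : Fin n → ℝ) : Prop :=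
  eucNorm u = 1 ∧ ∃ μ : ℝ, M.mulVec u = μ • u ∧
    ∀ μ' : ℝ, (∃ w : Fin n → ℝ, w ≠ 0 ∧ M.mulVec w = μ' • w) → |μ'| ≤ |μ|

/-- The quantity `η = η(N, n, v, δ)` with universal constant `C`. -/
noncomputable def etaBound (C : ℝ) (N n : ℕ) (v : Fin N → ℝ) (δ : ℝ) : ℝ :=
  C * ((eucNorm v + 1) * n * Real.sqrt (Real.log (N / δ)) / (N : ℝ) ^ ((3 : ℝ) / 2)
    + lpNorm 4 v ^ 2 * Real.sqrt (n * Real.log (N / δ)) / N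
    + lpNorm 6 v ^ 3 * (Real.sqrt n + Real.sqrt (Real.log (N / δ))) / Real.sqrt N
    + supNorm v ^ 2 * (n * Real.log (N / δ) + (Real.log (N / δ)) ^ 2) / N
    + (n * Real.log (N / δ)) ^ ((3 : ℝ) / 2) / (N : ℝ) ^ 2
    + |eucNorm v ^ 2 - 1| / N)

/-! By orthogonal invariance it suffices to treat `Q = 1`. With `e₀` the first basis vector,
`specMat` of the Gaussian basis `Y` is close in operator norm to `(‖v‖₄⁴ - 3 / N) e₀ e₀ᵀ`, and
`Y e₀ = v`; a perturbation argument for leading eigenvectors then puts `u` near `± e₀` and `Y u`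
near `± v`.

For the operator norm bound, expand the quadratic form at a unit vector `w` as a polynomial in
`w 0` whose coefficients are sums over the independent rows of `Y`, and control it on a finite
`1 / 2`-net of the sphere. The sums have degree up to four in the Gaussian entries, so they have no
exponential moments: the row deviations `‖b‖² - m / N` are truncated first, at a level which they
exceed in no row with high probability, and Bernstein-type (subgamma) bounds are applied to the
truncated sums. The truncation introduces a bias in the degree four sum only. -/

section Nets

open Metric Module

theorem exists_norm_sub_le_half_of_isCover {E : Type*} [SeminormedAddCommGroup E] {A s : Set E}
    (hs : IsCover (1 / 2) A s) {x : E} (hx : x ∈ A) :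
    ∃ c ∈ s, ‖x - c‖ ≤ 1 / 2 := by
  obtain ⟨c, hc, hxc⟩ := Set.mem_iUnion₂.1 (isCover_iff_subset_iUnion_closedBall.1 hs hx)
  exact ⟨c, hc, by simpa [dist_eq_norm] using hxc⟩

variable {E F : Type*} [NormedAddCommGroup E] [NormedSpace ℝ E]
  [NormedAddCommGroup F] [NormedSpace ℝ F]

theorem packingNumber_half_le_five_pow [FiniteDimensional ℝ E] {A : Set E}
    (hA : A ⊆ closedBall 0 1) : packingNumber (1 / 2) A ≤ 5 ^ finrank ℝ E := by
  classical
  refine iSup₂_le fun C hCA ↦ iSup_le fun hC ↦ ?_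
  by_contra! hcard
  obtain ⟨s, hsC, hs⟩ := Set.exists_subset_encard_eq (Order.add_one_le_of_lt hcard)
  have hsfin : s.Finite := Set.finite_of_encard_eq_coe (k := 5 ^ finrank ℝ E + 1) (mod_cast hs)
  have hle := Besicovitch.card_le_of_separated (hsfin.toFinset.image ((2 : ℝ) • ·)) ?_ ?_
  · rw [Finset.card_image_of_injective _ (smul_right_injective E two_ne_zero)] at hle
    rw [hsfin.encard_eq_coe_toFinset_card] at hs
    norm_cast at hs
    omega
  · simp only [Finset.forall_mem_image, Set.Finite.mem_toFinset, norm_smul, Real.norm_ofNat]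
    intro c hc
    linarith [mem_closedBall_zero_iff.1 (hA (hCA (hsC hc)))]
  · simp only [Finset.forall_mem_image, Set.Finite.mem_toFinset]
    intro c hc d hd hcd
    have hsep : ((1 / 2 : NNReal) : ENNReal) < edist c d :=
      hC (hsC hc) (hsC hd) fun h ↦ hcd (by rw [h])
    rw [edist_nndist, ENNReal.coe_lt_coe, ← NNReal.coe_lt_coe, coe_nndist, dist_eq_norm] at hsep
    rw [← smul_sub, norm_smul, Real.norm_ofNat]
    norm_num at hsep
    linarith

theorem exists_finset_isCover_half [FiniteDimensional ℝ E] {A : Set E}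
    (hA : A ⊆ closedBall 0 1) :
    ∃ s : Finset E, ↑s ⊆ A ∧ s.card ≤ 5 ^ finrank ℝ E ∧ IsCover (1 / 2) A (s : Set E) := by
  have hcover := (coveringNumber_le_packingNumber _ A).trans (packingNumber_half_le_five_pow hA)
  obtain ⟨s, hsA, hsfin, hs, hcard⟩ :=
    exists_set_encard_eq_coveringNumber (ne_top_of_le_ne_top
      (mod_cast ENat.natCast_ne_top (5 ^ finrank ℝ E)) hcover)
  lift s to Finset E using hsfin
  refine ⟨s, hsA, ?_, hs⟩
  rw [← hcard, Set.encard_coe_eq_coe_finsetCard] at hcover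
  exact_mod_cast hcover

theorem opNorm_le_two_mul_of_isCover_half (A : E →L[ℝ] F) {s : Set E}
    (hs : IsCover (1 / 2) (sphere 0 1) s) {K : ℝ} (hK0 : 0 ≤ K) (hK : ∀ c ∈ s, ‖A c‖ ≤ K) :
    ‖A‖ ≤ 2 * K := by
  have hA : ‖A‖ ≤ K + ‖A‖ * (1 / 2) := by
    refine A.opNorm_le_of_unit_norm (by positivity) fun x hx ↦ ?_
    obtain ⟨c, hc, hxc⟩ := exists_norm_sub_le_half_of_isCover hs (mem_sphere_zero_iff_norm.2 hx)
    calc ‖A x‖ = ‖A c + A (x - c)‖ := by simp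
      _ ≤ ‖A c‖ + ‖A (x - c)‖ := norm_add_le _ _
      _ ≤ K + ‖A‖ * (1 / 2) := add_le_add (hK c hc) (A.le_of_opNorm_le_of_le le_rfl hxc)
  linarith

end Nets

section Symmetric

open Metric Module InnerProductSpace

variable {E : Type*} [NormedAddCommGroup E] [InnerProductSpace ℝ E]

theorem exists_hasEigenvalue_abs_eq_norm [FiniteDimensional ℝ E] [Nontrivial E] {T : E →L[ℝ] E}
    (hT : T.IsSymmetric) : ∃ μ : ℝ, End.HasEigenvalue (T : End ℝ E) μ ∧ |μ| = ‖T‖ := by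
  have hspec : spectrum ℝ T = spectrum ℝ (T : End ℝ E) :=
    AlgEquiv.spectrum_eq (End.toContinuousLinearMap E) (T : End ℝ E)
  have hne : (spectrum ℝ T).Nonempty :=
    ⟨_, hspec ▸ (hT.hasEigenvalue_iSup_of_finiteDimensional).mem_spectrum⟩
  obtain ⟨μ, hμ, hnorm⟩ := spectrum.exists_nnnorm_eq_spectralRadius_of_nonempty hne
  rw [T.spectralRadius_eq_nnnorm hT.isSelfAdjoint, ENNReal.coe_inj] at hnorm
  exact ⟨μ, End.hasEigenvalue_iff_mem_spectrum.2 (hspec ▸ hμ), congrArg NNReal.toReal hnorm⟩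

theorem inner_map_self_sub_of_map_eq_smul {T : E →L[ℝ] E} (hT : T.IsSymmetric) {μ : ℝ} {u d : E}
    (hTu : T u = μ • u) (hu : ‖u‖ = 1) (hud : ‖u - d‖ = 1) :
    ⟪u - d, T (u - d)⟫_ℝ = μ * (1 - ‖d‖ ^ 2) + ⟪d, T d⟫_ℝ := by
  have hinner : 2 * ⟪u, d⟫_ℝ = ‖d‖ ^ 2 := by
    have h := norm_sub_sq_real u d
    rw [hud, hu] at h
    linarith
  have hsymm : ⟪u, T d⟫_ℝ = μ * ⟪u, d⟫_ℝ := by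
    rw [← real_inner_smul_left, ← hTu]
    exact (hT u d).symm
  rw [map_sub, inner_sub_left, inner_sub_right, inner_sub_right, hsymm, hTu,
    real_inner_smul_right, real_inner_smul_right, real_inner_self_eq_norm_sq, hu,
    real_inner_comm u d]
  linear_combination -μ * hinner

-- At a unit eigenvector `u` of extremal eigenvalue `μ`, the quadratic form at a nearby unit vector
-- `u - d` differs from `μ` only to second order in `d`.
theorem opNorm_le_two_mul_of_isCover_half_of_isSymmetric [FiniteDimensional ℝ E] {T : E →L[ℝ] E}
    (hT : T.IsSymmetric) {s : Set E} (hsphere : s ⊆ sphere 0 1)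
    (hs : IsCover (1 / 2) (sphere 0 1) s) {ε : ℝ} (hε0 : 0 ≤ ε)
    (hε : ∀ c ∈ s, |⟪c, T c⟫_ℝ| ≤ ε) : ‖T‖ ≤ 2 * ε := by
  rcases subsingleton_or_nontrivial E with hE | hE
  · simpa [Subsingleton.elim T 0] using hε0
  obtain ⟨μ, hμ, hnorm⟩ := exists_hasEigenvalue_abs_eq_norm hT
  obtain ⟨u₀, hu₀⟩ := hμ.exists_hasEigenvector
  obtain ⟨u, hu, hTu⟩ : ∃ u : E, ‖u‖ = 1 ∧ T u = μ • u :=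
    ⟨‖u₀‖⁻¹ • u₀, norm_smul_inv_norm hu₀.2, by
      rw [map_smul, smul_comm]; exact congrArg _ hu₀.apply_eq_smul⟩
  obtain ⟨c, hc, hd⟩ := exists_norm_sub_le_half_of_isCover hs (mem_sphere_zero_iff_norm.2 hu)
  obtain ⟨d, rfl⟩ : ∃ d, c = u - d := ⟨u - c, by abel⟩
  rw [sub_sub_cancel] at hd
  have hquad := inner_map_self_sub_of_map_eq_smul hT hTu hu
    (mem_sphere_zero_iff_norm.1 (hsphere hc))
  have hd2 : ‖d‖ ^ 2 ≤ 1 / 4 := by nlinarith [norm_nonneg d]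
  have hdT : |⟪d, T d⟫_ℝ| ≤ ‖T‖ * ‖d‖ ^ 2 := by
    calc |⟪d, T d⟫_ℝ| ≤ ‖d‖ * ‖T d‖ := abs_real_inner_le_norm _ _
      _ ≤ ‖d‖ * (‖T‖ * ‖d‖) := by gcongr; exact T.le_opNorm d
      _ = ‖T‖ * ‖d‖ ^ 2 := by ring
  have hmain : ‖T‖ * (1 - ‖d‖ ^ 2) ≤ ε + ‖T‖ * ‖d‖ ^ 2 := by
    calc ‖T‖ * (1 - ‖d‖ ^ 2) = |⟪u - d, T (u - d)⟫_ℝ - ⟪d, T d⟫_ℝ| := by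
          rw [hquad, add_sub_cancel_right, abs_mul, hnorm, abs_of_nonneg (a := 1 - _) (by linarith)]
      _ ≤ |⟪u - d, T (u - d)⟫_ℝ| + |⟪d, T d⟫_ℝ| := abs_sub _ _
      _ ≤ ε + ‖T‖ * ‖d‖ ^ 2 := add_le_add (hε _ hc) hdT
  nlinarith [norm_nonneg T]

theorem inner_sub_inner_smul_left {e : E} (he : ‖e‖ = 1) (u : E) :
    ⟪u - ⟪e, u⟫_ℝ • e, e⟫_ℝ = 0 := by
  rw [inner_sub_left, real_inner_smul_left, real_inner_self_eq_norm_sq, he, real_inner_comm]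
  ring

theorem inner_sub_inner_smul_self {e : E} (he : ‖e‖ = 1) (u : E) :
    ⟪u - ⟪e, u⟫_ℝ • e, u⟫_ℝ = ‖u - ⟪e, u⟫_ℝ • e‖ ^ 2 := by
  rw [← real_inner_self_eq_norm_sq, inner_sub_right _ u, real_inner_smul_right,
    inner_sub_inner_smul_left he, mul_zero, sub_zero]

-- Testing `(T - l • e ⊗ e) u = μ u - l ⟪e, u⟫ e` against the component of `u` orthogonal to `e`
-- gets rid of the rank-one term.
theorem mul_norm_sub_inner_smul_le {T : E →L[ℝ] E} {e u : E} {l μ ε : ℝ}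
    (he : ‖e‖ = 1) (hu : ‖u‖ = 1) (hT : ‖T - l • rankOne ℝ e e‖ ≤ ε) (hTu : T u = μ • u)
    (hμ : ‖T‖ ≤ |μ|) : |l| * ‖u - ⟪e, u⟫_ℝ • e‖ ≤ 2 * ε := by
  have hpe := inner_sub_inner_smul_left he u
  have hpu := inner_sub_inner_smul_self he u
  set p := u - ⟪e, u⟫_ℝ • e
  have hresidual : ⟪p, (T - l • rankOne ℝ e e) u⟫_ℝ = μ * ‖p‖ ^ 2 := by
    simp only [_root_.sub_apply, _root_.smul_apply, rankOne_apply, inner_sub_right,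
      real_inner_smul_right, hpe, hTu, hpu]
    ring
  have hbound : |⟪p, (T - l • rankOne ℝ e e) u⟫_ℝ| ≤ ‖p‖ * ε :=
    (abs_real_inner_le_norm _ _).trans <| by
      gcongr
      simpa using ContinuousLinearMap.le_of_opNorm_le_of_le _ hT hu.le
  have hl : |l| ≤ |μ| + ε := by
    calc |l| = ‖l • rankOne ℝ e e‖ := by simp [norm_smul, he]
      _ ≤ ‖T‖ + ‖T - l • rankOne ℝ e e‖ := norm_le_norm_add_norm_sub _ _
      _ ≤ |μ| + ε := add_le_add hμ hT
  rcases (norm_nonneg p).eq_or_lt with hp0 | hp0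
  · simpa [← hp0] using (norm_nonneg _).trans hT
  have hp1 : ‖p‖ ≤ 1 := by
    have h : ‖p‖ * ‖p‖ ≤ ‖p‖ * 1 := by
      rw [← sq, ← hpu, ← hu]
      exact real_inner_le_norm p u
    exact le_of_mul_le_mul_left h hp0
  have hμp : |μ| * ‖p‖ ≤ ε := by
    rw [hresidual, abs_mul, abs_of_nonneg (sq_nonneg ‖p‖)] at hbound
    nlinarith
  nlinarith [(norm_nonneg _).trans hT]

theorem exists_sign_norm_smul_sub_sq_le {e u : E} (he : ‖e‖ = 1) (hu : ‖u‖ = 1) :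
    ∃ s : ℝ, (s = 1 ∨ s = -1) ∧ ‖s • u - e‖ ^ 2 ≤ 2 * ‖u - ⟪e, u⟫_ℝ • e‖ ^ 2 := by
  have hperp : ‖u - ⟪e, u⟫_ℝ • e‖ ^ 2 = 1 - |⟪e, u⟫_ℝ| ^ 2 := by
    rw [norm_sub_sq_real, norm_smul, real_inner_smul_right, real_inner_comm, hu, he, mul_one,
      Real.norm_eq_abs, sq_abs]
    ring
  have hle : |⟪e, u⟫_ℝ| ≤ 1 := by simpa [he, hu] using abs_real_inner_le_norm e u
  obtain ⟨s, hs, hsa⟩ : ∃ s : ℝ, (s = 1 ∨ s = -1) ∧ s * ⟪e, u⟫_ℝ = |⟪e, u⟫_ℝ| := by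
    rcases abs_choice ⟪e, u⟫_ℝ with h | h
    · exact ⟨1, .inl rfl, by rw [h, one_mul]⟩
    · exact ⟨-1, .inr rfl, by rw [h, neg_one_mul]⟩
  have hs1 : |s| = 1 := by rcases hs with rfl | rfl <;> simp
  refine ⟨s, hs, ?_⟩
  rw [hperp, norm_sub_sq_real, norm_smul, real_inner_smul_left, real_inner_comm, hsa, hu, he,
    Real.norm_eq_abs, hs1]
  nlinarith [abs_nonneg ⟪e, u⟫_ℝ]

theorem exists_sign_mul_norm_smul_sub_le {T : E →L[ℝ] E} {e u : E} {l μ ε : ℝ}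
    (he : ‖e‖ = 1) (hu : ‖u‖ = 1) (hT : ‖T - l • rankOne ℝ e e‖ ≤ ε) (hTu : T u = μ • u)
    (hμ : ‖T‖ ≤ |μ|) : ∃ s : ℝ, (s = 1 ∨ s = -1) ∧ |l| * ‖s • u - e‖ ≤ 3 * ε := by
  obtain ⟨s, hs, hdist⟩ := exists_sign_norm_smul_sub_sq_le he hu
  refine ⟨s, hs, abs_le_of_sq_le_sq' ?_ (by linarith [(norm_nonneg _).trans hT]) |>.2⟩
  have hsin := mul_norm_sub_inner_smul_le he hu hT hTu hμ
  calc (|l| * ‖s • u - e‖) ^ 2 = |l| ^ 2 * ‖s • u - e‖ ^ 2 := mul_pow _ _ _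
    _ ≤ |l| ^ 2 * (2 * ‖u - ⟪e, u⟫_ℝ • e‖ ^ 2) := by gcongr
    _ = 2 * (|l| * ‖u - ⟪e, u⟫_ℝ • e‖) ^ 2 := by ring
    _ ≤ 2 * (2 * ε) ^ 2 := by gcongr
    _ ≤ (3 * ε) ^ 2 := by nlinarith [sq_nonneg ε]

end Symmetric

section Matrices

open Metric InnerProductSpace
open scoped Matrix.Norms.L2Operator

variable {ι κ : Type*} [Fintype ι] [Fintype κ] [DecidableEq κ]

theorem eucNorm_eq_norm_toLp {k : ℕ} (v : Fin k → ℝ) : eucNorm v = ‖WithLp.toLp 2 v‖ := by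
  simp [eucNorm, EuclideanSpace.norm_eq]

theorem eucNorm_nonneg {k : ℕ} (v : Fin k → ℝ) : 0 ≤ eucNorm v := Real.sqrt_nonneg _

theorem eucNorm_sq_eq_sum {k : ℕ} (v : Fin k → ℝ) : eucNorm v ^ 2 = ∑ i, v i ^ 2 :=
  Real.sq_sqrt (Finset.sum_nonneg fun i _ ↦ sq_nonneg (v i))

theorem eucNorm_sq {k : ℕ} (v : Fin k → ℝ) : eucNorm v ^ 2 = v ⬝ᵥ v := by
  rw [eucNorm_sq_eq_sum, dotProduct]
  simp only [sq]

theorem dotProduct_self_eq_norm_sq (x : EuclideanSpace ℝ ι) : x.ofLp ⬝ᵥ x.ofLp = ‖x‖ ^ 2 := by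
  rw [EuclideanSpace.real_norm_sq_eq]
  simp only [dotProduct, sq]

theorem eucNorm_mulVec_le {k l : ℕ} (A : Matrix (Fin k) (Fin l) ℝ) (x : Fin l → ℝ) :
    eucNorm (A *ᵥ x) ≤ ‖A‖ * eucNorm x := by
  rw [eucNorm_eq_norm_toLp, eucNorm_eq_norm_toLp]
  exact A.l2_opNorm_mulVec (WithLp.toLp 2 x)

theorem toEuclideanCLM_isSymmetric {M : Matrix κ κ ℝ} (hM : M.IsSymm) :
    (toEuclideanCLM (𝕜 := ℝ) M).IsSymmetric :=
  isSymmetric_toEuclideanLin_iff.2 (isHermitian_iff_isSymm.2 hM)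

theorem l2_opNorm_le_two_mul_of_isCover_half (A : Matrix ι κ ℝ) {s : Set (EuclideanSpace ℝ κ)}
    (hs : IsCover (1 / 2) (sphere 0 1) s) {K : ℝ} (hK0 : 0 ≤ K)
    (hK : ∀ c ∈ s, ∑ i, (A i ⬝ᵥ c.ofLp) ^ 2 ≤ K ^ 2) : ‖A‖ ≤ 2 * K := by
  rw [l2_opNorm_def]
  refine opNorm_le_two_mul_of_isCover_half _ hs hK0 fun c hc ↦ ?_
  refine abs_le_of_sq_le_sq' ?_ hK0 |>.2
  rw [EuclideanSpace.real_norm_sq_eq]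
  exact hK c hc

theorem l2_opNorm_le_two_mul_of_isCover_half_of_isSymm {M : Matrix κ κ ℝ} (hM : M.IsSymm)
    {s : Set (EuclideanSpace ℝ κ)} (hsphere : s ⊆ sphere 0 1)
    (hs : IsCover (1 / 2) (sphere 0 1) s) {ε : ℝ} (hε0 : 0 ≤ ε)
    (hε : ∀ c ∈ s, |c.ofLp ⬝ᵥ M *ᵥ c.ofLp| ≤ ε) : ‖M‖ ≤ 2 * ε := by
  rw [← l2_opNorm_toEuclideanCLM]
  refine opNorm_le_two_mul_of_isCover_half_of_isSymmetric (toEuclideanCLM_isSymmetric hM) hsphere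
    hs hε0 fun c hc ↦ ?_
  rw [inner_toEuclideanCLM]
  exact hε c hc

theorem IsLeadingEigen.exists_l2_opNorm_le {n : ℕ} {M : Matrix (Fin n) (Fin n) ℝ} (hM : M.IsSymm)
    {u : Fin n → ℝ} (hu : IsLeadingEigen M u) : ∃ μ : ℝ, M *ᵥ u = μ • u ∧ ‖M‖ ≤ |μ| := by
  obtain ⟨hu1, μ, hμ, hmax⟩ := hu
  have hu0 : WithLp.toLp 2 u ≠ 0 := fun h ↦ by simp [eucNorm_eq_norm_toLp, h] at hu1
  have : Nontrivial (EuclideanSpace ℝ (Fin n)) := nontrivial_of_ne _ _ hu0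
  obtain ⟨ν, hν, hnorm⟩ := exists_hasEigenvalue_abs_eq_norm (toEuclideanCLM_isSymmetric hM)
  obtain ⟨w, hw⟩ := hν.exists_hasEigenvector
  refine ⟨μ, hμ, ?_⟩
  rw [← l2_opNorm_toEuclideanCLM, ← hnorm]
  exact hmax ν ⟨w.ofLp, fun h ↦ hw.2 (by simpa using h),
    congrArg WithLp.ofLp hw.apply_eq_smul⟩

theorem IsLeadingEigen.exists_sign_mul_eucNorm_sub_le {n : ℕ} {M : Matrix (Fin n) (Fin n) ℝ}
    (hM : M.IsSymm) {u e : Fin n → ℝ} {l ε : ℝ} (he : eucNorm e = 1)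
    (hME : ‖M - l • vecMulVec e e‖ ≤ ε) (hu : IsLeadingEigen M u) :
    ∃ s : ℝ, (s = 1 ∨ s = -1) ∧ |l| * eucNorm (s • u - e) ≤ 3 * ε := by
  obtain ⟨μ, hμ, hnorm⟩ := hu.exists_l2_opNorm_le hM
  simp only [eucNorm_eq_norm_toLp] at he ⊢
  rw [← l2_opNorm_toEuclideanCLM] at hME hnorm
  have hrank : toEuclideanCLM (𝕜 := ℝ) (vecMulVec e e) =
      rankOne ℝ (WithLp.toLp 2 e) (WithLp.toLp 2 e) := by
    ext x i
    simp [vecMulVec_mulVec, PiLp.inner_apply, dotProduct, mul_comm]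
  rw [map_sub, map_smul, hrank] at hME
  exact exists_sign_mul_norm_smul_sub_le he (by rw [← eucNorm_eq_norm_toLp, hu.1]) hME
    (congrArg (WithLp.toLp 2) hμ) hnorm

theorem IsLeadingEigen.mulVec_of_conj {n : ℕ} {M Q : Matrix (Fin n) (Fin n) ℝ} (hQ : Qᵀ * Q = 1)
    {u : Fin n → ℝ} (hu : IsLeadingEigen (Qᵀ * M * Q) u) : IsLeadingEigen M (Q *ᵥ u) := by
  have hQ' : Q * Qᵀ = 1 := mul_eq_one_comm.1 hQ
  obtain ⟨hu1, μ, hμ, hmax⟩ := hu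
  refine ⟨?_, μ, ?_, ?_⟩
  · rw [← hu1, ← sq_eq_sq₀ (eucNorm_nonneg _) (eucNorm_nonneg _), eucNorm_sq, eucNorm_sq,
      dotProduct_mulVec, vecMul_mulVec, hQ, vecMul_one]
  · have h := congrArg (Q *ᵥ ·) hμ
    simpa [mulVec_mulVec, ← mul_assoc, hQ', mulVec_smul] using h
  · rintro μ' ⟨w, hw, hμ'⟩
    refine hmax μ' ⟨Qᵀ *ᵥ w, fun h ↦ hw ?_, ?_⟩
    · simpa [mulVec_mulVec, hQ'] using congrArg (Q *ᵥ ·) h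
    · rw [mulVec_mulVec, mul_assoc, hQ', mul_one, ← mulVec_mulVec, hμ', mulVec_smul]

end Matrices

section SpecMat

open scoped Matrix.Norms.L2Operator

variable {N n m : ℕ}

theorem specMat_eq (Y : Matrix (Fin N) (Fin n) ℝ) :
    specMat Y =
      ∑ i, (Y i ⬝ᵥ Y i - ((n : ℝ) - 1) / N) • vecMulVec (Y i) (Y i) - (3 / N : ℝ) • 1 := by
  simp only [specMat, dotProduct, sq]

theorem specMat_isSymm (Y : Matrix (Fin N) (Fin n) ℝ) : (specMat Y).IsSymm := by
  ext i j
  simp [specMat, Matrix.sum_apply, Matrix.vecMulVec_apply, Matrix.one_apply, mul_comm, eq_comm]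

theorem dotProduct_specMat_mulVec (Y : Matrix (Fin N) (Fin n) ℝ) (w : Fin n → ℝ) :
    w ⬝ᵥ specMat Y *ᵥ w =
      ∑ i, (Y i ⬝ᵥ Y i - ((n : ℝ) - 1) / N) * (Y i ⬝ᵥ w) ^ 2 - 3 / N * (w ⬝ᵥ w) := by
  simp only [specMat_eq, sub_mulVec, sum_mulVec, smul_mulVec, one_mulVec, dotProduct_sub,
    dotProduct_sum, dotProduct_smul, vecMulVec_mulVec, smul_eq_mul, op_smul_eq_smul,
    dotProduct_comm w (Y _), sq]

theorem specMat_mul_of_orthogonal (Y : Matrix (Fin N) (Fin n) ℝ) {Q : Matrix (Fin n) (Fin n) ℝ}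
    (hQ : Qᵀ * Q = 1) : specMat (Y * Q) = Qᵀ * specMat Y * Q := by
  have hrow (i : Fin N) : (Y * Q) i = Y i ᵥ* Q := rfl
  have hnorm (i : Fin N) : (Y i ᵥ* Q) ⬝ᵥ (Y i ᵥ* Q) = Y i ⬝ᵥ Y i := by
    rw [← dotProduct_mulVec, ← mulVec_transpose, mulVec_mulVec, mul_eq_one_comm.1 hQ, one_mulVec]
  simp only [specMat_eq, hrow, hnorm, mul_sub, sub_mul, Finset.mul_sum, Finset.sum_mul,
    mul_smul_comm, smul_mul_assoc, mul_vecMulVec, vecMulVec_mul, mulVec_transpose, mul_one, hQ]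

theorem dotProduct_self_eq_sq_add_tail (w : Fin (m + 1) → ℝ) :
    w ⬝ᵥ w = w 0 ^ 2 + Fin.tail w ⬝ᵥ Fin.tail w := by
  simp only [dotProduct, Fin.sum_univ_succ, Fin.tail, sq]

theorem tail_dotProduct_tail_le_one {w : Fin (m + 1) → ℝ} (hw : w ⬝ᵥ w = 1) :
    Fin.tail w ⬝ᵥ Fin.tail w ≤ 1 := by
  linarith [dotProduct_self_eq_sq_add_tail w, sq_nonneg (w 0)]

theorem rowCat_eq_vecCons (a : ℝ) (b : Fin m → ℝ) : rowCat (n := m + 1) a b = vecCons a b := by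
  ext j
  cases j using Fin.cases <;> simp [rowCat]

theorem gaussBasis_mulVec_single_zero (v : Fin N → ℝ) (B : Fin N → Fin m → ℝ) :
    gaussBasis (n := m + 1) v B *ᵥ Pi.single 0 1 = v := by
  ext i
  simp [gaussBasis, rowCat]

theorem gaussBasis_apply_dotProduct (v : Fin N → ℝ) (B : Fin N → Fin m → ℝ) (w : Fin (m + 1) → ℝ)
    (i : Fin N) : gaussBasis (n := m + 1) v B i ⬝ᵥ w = v i * w 0 + B i ⬝ᵥ Fin.tail w := by
  change rowCat _ _ ⬝ᵥ w = _
  rw [rowCat_eq_vecCons, cons_dotProduct]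
  rfl

theorem exists_sign_mul_eucNorm_gaussBasis_sub_le {v : Fin N → ℝ} {B : Fin N → Fin m → ℝ}
    {Q : Matrix (Fin (m + 1)) (Fin (m + 1)) ℝ} (hQ : Qᵀ * Q = 1) {l ε K : ℝ}
    (hε : ‖specMat (gaussBasis (n := m + 1) v B) -
      l • vecMulVec (Pi.single 0 1) (Pi.single 0 1)‖ ≤ ε)
    (hK : ‖gaussBasis (n := m + 1) v B‖ ≤ K) {u : Fin (m + 1) → ℝ}
    (hu : IsLeadingEigen (specMat (gaussBasis (n := m + 1) v B * Q)) u) :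
    ∃ s : ℝ, (s = 1 ∨ s = -1) ∧
      |l| * eucNorm (s • (gaussBasis (n := m + 1) v B * Q) *ᵥ u - v) ≤ 3 * ε * K := by
  set Y := gaussBasis (n := m + 1) v B
  rw [specMat_mul_of_orthogonal Y hQ] at hu
  obtain ⟨s, hs, hle⟩ := (hu.mulVec_of_conj hQ).exists_sign_mul_eucNorm_sub_le (specMat_isSymm Y)
    (by simp [eucNorm_eq_norm_toLp]) hε
  refine ⟨s, hs, ?_⟩
  have hdiff : s • (Y * Q) *ᵥ u - v = Y *ᵥ (s • Q *ᵥ u - Pi.single 0 1) := by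
    rw [mulVec_sub, gaussBasis_mulVec_single_zero, mulVec_smul, mulVec_mulVec]
  calc |l| * eucNorm (s • (Y * Q) *ᵥ u - v)
      ≤ |l| * (‖Y‖ * eucNorm (s • Q *ᵥ u - Pi.single 0 1)) := by
        rw [hdiff]; gcongr; exact eucNorm_mulVec_le _ _
    _ = |l| * eucNorm (s • Q *ᵥ u - Pi.single 0 1) * ‖Y‖ := by ring
    _ ≤ 3 * ε * K := by
        have := (norm_nonneg _).trans hε
        gcongr

end SpecMat

section Subgamma

/-- `Z` is sub-gamma with mean proxy `m`, variance proxy `2 * τ` and scale `ρ`: its moment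
generating function is dominated by the Gaussian one on `{s | |s| * ρ ≤ 1}`. The scale `ρ = 0` is
the sub-Gaussian case. -/
structure HasSubgammaMGF {Ω : Type*} {mΩ : MeasurableSpace Ω} (Z : Ω → ℝ) (m τ ρ : ℝ)
    (μ : Measure Ω) : Prop where
  integrable_exp_mul {s : ℝ} (hs : |s| * ρ ≤ 1) : Integrable (fun ω ↦ Real.exp (s * Z ω)) μ
  mgf_le {s : ℝ} (hs : |s| * ρ ≤ 1) : mgf Z μ s ≤ Real.exp (s * m + s ^ 2 * τ)

namespace HasSubgammaMGF

variable {Ω Ω' : Type*} {mΩ : MeasurableSpace Ω} {mΩ' : MeasurableSpace Ω'} {μ : Measure Ω}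
  {ν : Measure Ω'} {Z W : Ω → ℝ} {m τ τ' ρ ρ' : ℝ}

theorem mono (h : HasSubgammaMGF Z m τ ρ μ) (hτ : τ ≤ τ') (hρ : ρ ≤ ρ') :
    HasSubgammaMGF Z m τ' ρ' μ := by
  have hs {s : ℝ} (hs : |s| * ρ' ≤ 1) : |s| * ρ ≤ 1 := le_trans (by gcongr) hs
  refine ⟨fun h' ↦ h.integrable_exp_mul (hs h'), fun h' ↦ (h.mgf_le (hs h')).trans ?_⟩
  gcongr

theorem neg (h : HasSubgammaMGF Z m τ ρ μ) : HasSubgammaMGF (-Z) (-m) τ ρ μ where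
  integrable_exp_mul {s} hs := by
    simpa using h.integrable_exp_mul (s := -s) (by rwa [abs_neg])
  mgf_le {s} hs := by
    simpa [mgf_neg] using h.mgf_le (s := -s) (by rwa [abs_neg])

theorem sub_const (h : HasSubgammaMGF Z m τ ρ μ) (a : ℝ) :
    HasSubgammaMGF (fun ω ↦ Z ω - a) (m - a) τ ρ μ where
  integrable_exp_mul {s} hs := by
    simpa only [mul_sub, Real.exp_sub] using (h.integrable_exp_mul hs).div_const _
  mgf_le {s} hs := by
    simp only [sub_eq_add_neg, mgf_add_const]
    calc mgf Z μ s * Real.exp (s * -a) ≤ Real.exp (s * m + s ^ 2 * τ) * Real.exp (s * -a) := by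
          gcongr; exact h.mgf_le hs
      _ = Real.exp (s * (m + -a) + s ^ 2 * τ) := by rw [← Real.exp_add]; ring_nf

theorem const_mul (h : HasSubgammaMGF Z m τ ρ μ) {c : ℝ} (hc : |c| * ρ ≤ ρ') :
    HasSubgammaMGF (fun ω ↦ c * Z ω) (c * m) (c ^ 2 * τ) ρ' μ := by
  have hs {s : ℝ} (hs : |s| * ρ' ≤ 1) : |s * c| * ρ ≤ 1 := by
    rw [abs_mul, mul_assoc]
    exact le_trans (by gcongr) hs
  refine ⟨fun {s} h' ↦ ?_, fun {s} h' ↦ ?_⟩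
  · simpa only [mul_assoc] using h.integrable_exp_mul (hs h')
  · rw [mgf_const_mul, mul_comm c s]
    exact (h.mgf_le (hs h')).trans_eq (by ring_nf)

theorem comp_measurePreserving (h : HasSubgammaMGF Z m τ ρ μ) {f : Ω' → Ω}
    (hf : MeasurePreserving f ν μ) : HasSubgammaMGF (Z ∘ f) m τ ρ ν where
  integrable_exp_mul hs := hf.integrable_comp_of_integrable (h.integrable_exp_mul hs)
  mgf_le {s} hs := by
    have hmeas := (h.integrable_exp_mul hs).aestronglyMeasurable
    rw [← hf.map_eq] at h hmeas
    rw [← mgf_map hf.aemeasurable hmeas]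
    exact h.mgf_le hs

theorem sum_of_iIndepFun {ι : Type*} {X : ι → Ω → ℝ} {m τ : ι → ℝ} (hindep : iIndepFun X μ)
    (hmeas : ∀ i, Measurable (X i)) (s : Finset ι) (h : ∀ i, HasSubgammaMGF (X i) (m i) (τ i) ρ μ) :
    HasSubgammaMGF (∑ i ∈ s, X i) (∑ i ∈ s, m i) (∑ i ∈ s, τ i) ρ μ := by
  have := hindep.isProbabilityMeasure
  refine ⟨fun ht ↦ ?_, fun {t} ht ↦ ?_⟩
  · exact hindep.integrable_exp_mul_sum hmeas fun i _ ↦ (h i).integrable_exp_mul ht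
  · rw [hindep.mgf_sum hmeas, Finset.mul_sum, Finset.mul_sum, ← Finset.sum_add_distrib,
      Real.exp_sum]
    exact Finset.prod_le_prod (fun _ _ ↦ mgf_nonneg) fun i _ ↦ (h i).mgf_le ht

theorem weighted_sum_pi [IsProbabilityMeasure μ] {ι : Type*} [Fintype ι]
    (h : HasSubgammaMGF Z m τ ρ μ) (hZ : Measurable Z) {c : ι → ℝ} (hc : ∀ i, |c i| * ρ ≤ ρ') :
    HasSubgammaMGF (fun ω : ι → Ω ↦ ∑ i, c i * (Z (ω i) - m)) 0 (τ * ∑ i, c i ^ 2) ρ'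
      (Measure.pi fun _ ↦ μ) := by
  have hX (i : ι) : Measurable fun y : Ω ↦ c i * (Z y - m) := (hZ.sub_const m).const_mul (c i)
  have hsum := sum_of_iIndepFun (iIndepFun_pi (μ := fun _ : ι ↦ μ) fun i ↦ (hX i).aemeasurable)
    (fun i ↦ (hX i).comp (measurable_pi_apply i)) Finset.univ fun i ↦
    ((h.sub_const m).const_mul (hc i)).comp_measurePreserving (measurePreserving_eval _ i)
  simpa [Finset.sum_fn, Finset.mul_sum, mul_comm] using hsum

theorem measureReal_ge_le [IsFiniteMeasure μ] (h : HasSubgammaMGF Z 0 τ ρ μ) (hτ : 0 ≤ τ)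
    (hρ : 0 < ρ) {T : ℝ} (hT : 0 < T) :
    μ.real {ω | 2 * (√(τ * T) + ρ * T) ≤ Z ω} ≤ Real.exp (-T) := by
  -- the exponential moment is taken at `s = D⁻¹`, chosen so that `s * ρ ≤ 1` and `s ^ 2 * τ ≤ T`
  set D := √τ / √T + ρ with hD
  have hD0 : 0 < D := by positivity
  have hT' := Real.sq_sqrt hT.le
  have hthreshold : D⁻¹ * (2 * (√(τ * T) + ρ * T)) = 2 * T := by
    rw [inv_mul_eq_iff_eq_mul₀ hD0.ne', hD, Real.sqrt_mul hτ]
    field_simp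
    linear_combination √τ * hT'
  have hscale : |D⁻¹| * ρ ≤ 1 := by
    rw [abs_of_pos (inv_pos.2 hD0), inv_mul_le_one₀ hD0, hD]
    exact le_add_of_nonneg_left (by positivity)
  have hvar : D⁻¹ ^ 2 * τ ≤ T := by
    have hle : √τ ≤ D * √T := by
      rw [hD, add_mul, div_mul_cancel₀ _ (Real.sqrt_pos.2 hT).ne']
      exact le_add_of_nonneg_right (by positivity)
    rw [inv_pow, inv_mul_le_iff₀ (by positivity), ← hT', ← mul_pow, ← Real.sq_sqrt hτ]
    gcongr
  calc μ.real {ω | 2 * (√(τ * T) + ρ * T) ≤ Z ω}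
      ≤ Real.exp (-D⁻¹ * (2 * (√(τ * T) + ρ * T))) * mgf Z μ D⁻¹ :=
        measure_ge_le_exp_mul_mgf _ (inv_nonneg.2 hD0.le) (h.integrable_exp_mul hscale)
    _ ≤ Real.exp (-(2 * T)) * Real.exp T := by
        rw [neg_mul, hthreshold]
        gcongr
        exact (h.mgf_le hscale).trans (by simpa using hvar)
    _ = Real.exp (-T) := by rw [← Real.exp_add]; ring_nf

theorem measureReal_abs_gt_le [IsFiniteMeasure μ] (h : HasSubgammaMGF Z 0 τ ρ μ) (hτ : 0 ≤ τ)
    (hρ : 0 < ρ) {T : ℝ} (hT : 0 < T) :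
    μ.real {ω | 2 * (√(τ * T) + ρ * T) < |Z ω|} ≤ 2 * Real.exp (-T) := by
  set t := 2 * (√(τ * T) + ρ * T)
  have hneg : HasSubgammaMGF (-Z) 0 τ ρ μ := by simpa using h.neg
  calc μ.real {ω | t < |Z ω|} ≤ μ.real ({ω | t ≤ Z ω} ∪ {ω | t ≤ (-Z) ω}) :=
        measureReal_mono fun ω (hω : t < |Z ω|) ↦ le_abs.1 hω.le
    _ ≤ μ.real {ω | t ≤ Z ω} + μ.real {ω | t ≤ (-Z) ω} := measureReal_union_le _ _
    _ ≤ 2 * Real.exp (-T) := by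
        linarith [h.measureReal_ge_le hτ hρ hT, hneg.measureReal_ge_le hτ hρ hT]

theorem of_abs_le (hW : HasSubgammaMGF W 0 τ ρ μ) (hZ : AEMeasurable Z μ)
    (hsymm : ∀ s, mgf Z μ (-s) = mgf Z μ s) (hle : ∀ ω, |Z ω| ≤ |W ω|) :
    HasSubgammaMGF Z 0 τ ρ μ := by
  have hcosh (s : ℝ) (ω : Ω) : Real.exp (s * Z ω) + Real.exp (-s * Z ω) ≤
      Real.exp (s * W ω) + Real.exp (-s * W ω) := by
    have : Real.cosh (s * Z ω) ≤ Real.cosh (s * W ω) := by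
      rw [Real.cosh_le_cosh, abs_mul, abs_mul]
      exact mul_le_mul_of_nonneg_left (hle ω) (abs_nonneg s)
    simp only [Real.cosh_eq, ← neg_mul] at this
    linarith
  have hdom {s : ℝ} (hs : |s| * ρ ≤ 1) :
      Integrable (fun ω ↦ Real.exp (s * W ω) + Real.exp (-s * W ω)) μ :=
    (hW.integrable_exp_mul hs).add (hW.integrable_exp_mul (by rwa [abs_neg]))
  have hint {s : ℝ} (hs : |s| * ρ ≤ 1) : Integrable (fun ω ↦ Real.exp (s * Z ω)) μ := by
    refine (hdom hs).mono' (hZ.const_mul s).exp.aestronglyMeasurable (.of_forall fun ω ↦ ?_)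
    rw [Real.norm_of_nonneg (Real.exp_pos _).le]
    linarith [hcosh s ω, Real.exp_pos (-s * Z ω)]
  refine ⟨hint, fun {s} hs ↦ ?_⟩
  have hs' : |-s| * ρ ≤ 1 := by rwa [abs_neg]
  have hsum : mgf Z μ s + mgf Z μ (-s) ≤ mgf W μ s + mgf W μ (-s) := by
    simp only [mgf]
    rw [← integral_add (hint hs) (hint hs'),
      ← integral_add (hW.integrable_exp_mul hs) (hW.integrable_exp_mul hs')]
    exact integral_mono ((hint hs).add (hint hs')) (hdom hs) (hcosh s)
  have hW₁ := hW.mgf_le hs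
  have hW₂ := hW.mgf_le hs'
  rw [neg_sq] at hW₂
  simp only [mul_zero] at hW₁ hW₂ ⊢
  linarith [hsymm s]

end HasSubgammaMGF

theorem exp_le_one_add_add_sq_mul_exp_abs (y : ℝ) :
    Real.exp y ≤ 1 + y + y ^ 2 * Real.exp |y| := by
  have h := Complex.norm_exp_sub_sum_le_norm_mul_exp (y : ℂ) 2
  have hcast : Complex.exp y - ∑ m ∈ Finset.range 2, (y : ℂ) ^ m / (m.factorial : ℂ) =
      ((Real.exp y - (1 + y) : ℝ) : ℂ) := by
    simp [Finset.sum_range_succ]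
  rw [hcast, Complex.norm_real, Complex.norm_real, Real.norm_eq_abs, Real.norm_eq_abs, sq_abs] at h
  linarith [le_abs_self (Real.exp y - (1 + y))]

theorem integrable_of_sq_le {Ω : Type*} {mΩ : MeasurableSpace Ω} {μ : Measure Ω}
    [IsFiniteMeasure μ] {Z W : Ω → ℝ} (hZ : AEStronglyMeasurable Z μ) (hW : Integrable W μ)
    (h : ∀ ω, Z ω ^ 2 ≤ W ω) : Integrable Z μ := by
  refine ((memLp_two_iff_integrable_sq hZ).2 ?_).integrable one_le_two
  exact hW.mono' (hZ.pow 2) (.of_forall fun ω ↦ by simpa using h ω)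

theorem HasSubgammaMGF.of_sq_mul_exp_abs_le {Ω : Type*} {mΩ : MeasurableSpace Ω} {μ : Measure Ω}
    [IsProbabilityMeasure μ] {Z W : Ω → ℝ} {τ ρ : ℝ} (hZ : AEMeasurable Z μ) (hW : Integrable W μ)
    (hτ : ∫ ω, W ω ∂μ ≤ τ)
    (h : ∀ s : ℝ, |s| * ρ ≤ 1 → ∀ ω, Z ω ^ 2 * Real.exp |s * Z ω| ≤ W ω) :
    HasSubgammaMGF Z (∫ ω, Z ω ∂μ) τ ρ μ := by
  have hZint : Integrable Z μ :=
    integrable_of_sq_le hZ.aestronglyMeasurable hW fun ω ↦ by simpa using h 0 (by simp) ω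
  have hlin (s : ℝ) : Integrable (fun ω ↦ 1 + s * Z ω) μ :=
    (integrable_const 1).add (hZint.const_mul s)
  have hdom (s : ℝ) : Integrable (fun ω ↦ 1 + s * Z ω + s ^ 2 * W ω) μ :=
    (hlin s).add (hW.const_mul (s ^ 2))
  have hpt {s : ℝ} (hs : |s| * ρ ≤ 1) (ω : Ω) :
      Real.exp (s * Z ω) ≤ 1 + s * Z ω + s ^ 2 * W ω := by
    have := mul_le_mul_of_nonneg_left (h s hs ω) (sq_nonneg s)
    linarith [exp_le_one_add_add_sq_mul_exp_abs (s * Z ω)]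
  have hint {s : ℝ} (hs : |s| * ρ ≤ 1) : Integrable (fun ω ↦ Real.exp (s * Z ω)) μ :=
    (hdom s).mono' (hZ.const_mul s).exp.aestronglyMeasurable (.of_forall fun ω ↦ by
      rw [Real.norm_of_nonneg (Real.exp_pos _).le]
      exact hpt hs ω)
  refine ⟨hint, fun {s} hs ↦ ?_⟩
  calc mgf Z μ s ≤ ∫ ω, (1 + s * Z ω + s ^ 2 * W ω) ∂μ :=
        integral_mono (hint hs) (hdom s) (hpt hs)
    _ = s * ∫ ω, Z ω ∂μ + s ^ 2 * ∫ ω, W ω ∂μ + 1 := by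
        rw [integral_add (hlin s) (hW.const_mul _), integral_add (integrable_const _)
          (hZint.const_mul s), integral_const_mul, integral_const_mul, integral_const,
          probReal_univ, one_smul]
        ring
    _ ≤ s * ∫ ω, Z ω ∂μ + s ^ 2 * τ + 1 := by gcongr
    _ ≤ Real.exp (s * ∫ ω, Z ω ∂μ + s ^ 2 * τ) := Real.add_one_le_exp _

end Subgamma

section GaussianReal

variable {r : NNReal}

theorem integrable_pow_gaussianReal (r : NNReal) (k : ℕ) :
    Integrable (fun y : ℝ ↦ y ^ k) (gaussianReal 0 r) := by
  have h := (memLp_id_gaussianReal (μ := 0) (v := r) k).integrable_norm_pow'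
  exact h.mono (by fun_prop) (.of_forall fun y ↦ by simp)

theorem integral_sq_gaussianReal (r : NNReal) : ∫ y : ℝ, y ^ 2 ∂gaussianReal 0 r = r := by
  have h := variance_fun_id_gaussianReal (μ := 0) (v := r)
  rw [variance_eq_integral (by fun_prop)] at h
  simpa [integral_id_gaussianReal] using h

theorem deriv_polynomial_mul_exp_mul_sq (p : Polynomial ℝ) (v : ℝ) :
    deriv (fun t : ℝ ↦ p.eval t * Real.exp (v * t ^ 2 / 2)) = fun t ↦
      (p.derivative + .C v * .X * p).eval t * Real.exp (v * t ^ 2 / 2) := by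
  ext t
  have hexp : HasDerivAt (fun t : ℝ ↦ Real.exp (v * t ^ 2 / 2))
      (Real.exp (v * t ^ 2 / 2) * (v * (2 * t) / 2)) t := by
    simpa using (((hasDerivAt_pow 2 t).const_mul v).div_const 2).exp
  rw [((p.hasDerivAt t).fun_mul hexp).deriv]
  simp only [Polynomial.eval_add, Polynomial.eval_mul, Polynomial.eval_C, Polynomial.eval_X]
  ring

theorem iteratedDeriv_four_exp_mul_sq (v : ℝ) :
    iteratedDeriv 4 (fun t : ℝ ↦ Real.exp (v * t ^ 2 / 2)) 0 = 3 * v ^ 2 := by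
  have hone : (fun t : ℝ ↦ Real.exp (v * t ^ 2 / 2)) =
      fun t ↦ (1 : Polynomial ℝ).eval t * Real.exp (v * t ^ 2 / 2) := by simp
  rw [hone]
  simp only [iteratedDeriv_succ, iteratedDeriv_zero, deriv_polynomial_mul_exp_mul_sq]
  simp only [mul_one, map_add, Polynomial.derivative_mul, Polynomial.derivative_one,
    Polynomial.derivative_C, Polynomial.derivative_X, Polynomial.derivative_zero,
    Polynomial.eval_add, Polynomial.eval_mul, Polynomial.eval_C, Polynomial.eval_X,
    Polynomial.eval_zero]
  norm_num
  ring

theorem integral_pow_four_gaussianReal (r : NNReal) :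
    ∫ y : ℝ, y ^ 4 ∂gaussianReal 0 r = 3 * (r : ℝ) ^ 2 := by
  have h := iteratedDeriv_mgf_zero (X := id) (μ := gaussianReal 0 r)
    (by simp [integrableExpSet_id_gaussianReal]) 4
  simp only [mgf_id_gaussianReal, zero_mul, zero_add, iteratedDeriv_four_exp_mul_sq] at h
  simpa using h.symm

theorem gaussianPDFReal_mul_exp_mul_sq (hr : r ≠ 0) (s y : ℝ) :
    gaussianPDFReal 0 r y * Real.exp (s * y ^ 2) =
      (√(2 * Real.pi * r))⁻¹ * Real.exp (-((1 - 2 * s * r) / (2 * r)) * y ^ 2) := by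
  have hr0 : (r : ℝ) ≠ 0 := by positivity
  rw [gaussianPDFReal, mul_assoc, ← Real.exp_add]
  congr 2
  field_simp
  ring

theorem integrable_exp_mul_sq_gaussianReal {s : ℝ} (hs : 2 * s * r < 1) :
    Integrable (fun y : ℝ ↦ Real.exp (s * y ^ 2)) (gaussianReal 0 r) := by
  rcases eq_or_ne r 0 with rfl | hr
  · rw [gaussianReal_zero_var]
    exact integrable_dirac (by simp)
  have : (0 : ℝ) < r := by positivity
  rw [gaussianReal_of_var_ne_zero 0 hr, integrable_withDensity_iff_integrable_smul'
    (measurable_gaussianPDF 0 r) (.of_forall fun _ ↦ gaussianPDF_lt_top)]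
  simp only [toReal_gaussianPDF, smul_eq_mul, gaussianPDFReal_mul_exp_mul_sq hr]
  exact (integrable_exp_neg_mul_sq (div_pos (by linarith) (by positivity))).const_mul _

theorem integral_exp_mul_sq_gaussianReal {s : ℝ} (hs : 2 * s * r < 1) :
    ∫ y : ℝ, Real.exp (s * y ^ 2) ∂gaussianReal 0 r = 1 / √(1 - 2 * s * r) := by
  rcases eq_or_ne r 0 with rfl | hr
  · simp
  have : (0 : ℝ) < r := by positivity
  have : 1 - 2 * s * r ≠ 0 := by linarith
  simp only [integral_gaussianReal_eq_integral_smul hr, smul_eq_mul,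
    gaussianPDFReal_mul_exp_mul_sq hr]
  rw [integral_const_mul, integral_gaussian, ← Real.sqrt_inv, ← Real.sqrt_mul (by positivity),
    one_div, ← Real.sqrt_inv]
  congr 1
  field_simp

theorem one_le_exp_add_sq_mul_one_sub {t : ℝ} (ht : |t| ≤ 1 / 2) :
    1 ≤ Real.exp (t + t ^ 2) * (1 - t) := by
  obtain ⟨_, h₂⟩ := abs_le.1 ht
  have ht0 : 0 ≤ 1 - t := by linarith
  rcases le_total 0 t with h | h
  · calc (1 : ℝ) ≤ (1 + (t + t ^ 2) + (t + t ^ 2) ^ 2 / 2) * (1 - t) := by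
          nlinarith [mul_nonneg (sq_nonneg t) (show 0 ≤ 1 - t - t ^ 2 - t ^ 3 by
            nlinarith [mul_nonneg h h, mul_nonneg h (sub_nonneg.2 h₂),
              mul_nonneg (mul_nonneg h h) h])]
      _ ≤ _ := by gcongr; exact Real.quadratic_le_exp_of_nonneg (by positivity)
  · calc (1 : ℝ) ≤ (t + t ^ 2 + 1) * (1 - t) := by
          nlinarith [mul_nonneg (sq_nonneg t) (neg_nonneg.2 h)]
      _ ≤ _ := by gcongr; exact Real.add_one_le_exp _

theorem one_div_sqrt_one_sub_le {t : ℝ} (ht : |t| ≤ 1 / 2) :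
    1 / √(1 - t) ≤ Real.exp (t / 2 + t ^ 2 / 2) := by
  have hsqrt : Real.exp (t / 2 + t ^ 2 / 2) = √(Real.exp (t + t ^ 2)) := by
    rw [← Real.exp_half, add_div]
  rw [div_le_iff₀ (Real.sqrt_pos.2 (by linarith [(abs_le.1 ht).2])), hsqrt,
    ← Real.sqrt_mul (Real.exp_pos _).le]
  exact Real.one_le_sqrt.2 (one_le_exp_add_sq_mul_one_sub ht)

theorem hasSubgammaMGF_sq_gaussianReal (r : NNReal) :
    HasSubgammaMGF (fun y ↦ y ^ 2) r (2 * (r : ℝ) ^ 2) (4 * r) (gaussianReal 0 r) := by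
  have ht {s : ℝ} (hs : |s| * (4 * r) ≤ 1) : |2 * s * r| ≤ 1 / 2 := by
    rw [abs_mul, abs_mul, NNReal.abs_eq, abs_two]
    linarith
  have hlt {s : ℝ} (hs : |s| * (4 * r) ≤ 1) : 2 * s * r < 1 := by
    linarith [le_of_abs_le (ht hs)]
  refine ⟨fun hs ↦ integrable_exp_mul_sq_gaussianReal (hlt hs), fun hs ↦ ?_⟩
  rw [mgf, integral_exp_mul_sq_gaussianReal (hlt hs)]
  exact (one_div_sqrt_one_sub_le (ht hs)).trans_eq (by ring_nf)

theorem hasSubgammaMGF_id_gaussianReal (r : NNReal) :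
    HasSubgammaMGF id 0 (r / 2) 0 (gaussianReal 0 r) where
  integrable_exp_mul _ := integrable_exp_mul_gaussianReal _
  mgf_le _ := by
    rw [mgf_id_gaussianReal]
    exact (Real.exp_le_exp.2 (by linarith))

instance (r : NNReal) : (gaussianReal 0 r).IsNegInvariant :=
  ⟨by simpa [Measure.neg] using gaussianReal_map_neg (μ := 0) (v := r)⟩

end GaussianReal

section GaussVec

variable {m : ℕ} {r : NNReal} {x : Fin m → ℝ}

instance (m : ℕ) (r : NNReal) : (gaussVec m r).IsNegInvariant := by
  unfold gaussVec; infer_instance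

theorem measurable_dotProduct_const (x : Fin m → ℝ) : Measurable fun b : Fin m → ℝ ↦ b ⬝ᵥ x := by
  unfold dotProduct; fun_prop

theorem gaussVec_map_dotProduct (m : ℕ) (r : NNReal) (x : Fin m → ℝ) :
    (gaussVec m r).map (fun b ↦ b ⬝ᵥ x) = gaussianReal 0 (r * (x ⬝ᵥ x).toNNReal) := by
  have hlaw (i : Fin m) : (gaussVec m r).map (fun b ↦ b i * x i) =
      gaussianReal 0 (⟨x i ^ 2, sq_nonneg _⟩ * r) := by
    have h := gaussianReal_map_mul_const (μ := 0) (v := r) (x i)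
    rw [← (measurePreserving_eval (fun _ : Fin m ↦ gaussianReal 0 r) i).map_eq,
      Measure.map_map (by fun_prop) (by fun_prop), mul_zero] at h
    exact h
  have hgauss (i : Fin m) : HasGaussianLaw (fun b ↦ b i * x i) (gaussVec m r) :=
    ⟨by rw [hlaw]; infer_instance⟩
  have hindep : iIndepFun (fun (i : Fin m) b ↦ b i * x i) (gaussVec m r) :=
    iIndepFun_pi (X := fun i y ↦ y * x i) fun _ ↦ by fun_prop
  have hmean : ∫ b, ∑ i, b i * x i ∂gaussVec m r = 0 := by
    have h := integral_neg_eq_self (fun b : Fin m → ℝ ↦ ∑ i, b i * x i) (gaussVec m r)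
    simp only [Pi.neg_apply, neg_mul, Finset.sum_neg_distrib, integral_neg] at h
    linarith
  have hvar : Var[fun b ↦ ∑ i, b i * x i; gaussVec m r] = r * (x ⬝ᵥ x) := by
    have h := variance_sum_pi (μ := fun _ : Fin m ↦ gaussianReal 0 r) (X := fun i y ↦ y * x i)
      fun i ↦ (memLp_id_gaussianReal 2).mul_const (x i)
    simp only [variance_mul_const, variance_fun_id_gaussianReal] at h
    rw [show (fun b : Fin m → ℝ ↦ ∑ i, b i * x i) = ∑ i, fun b ↦ b i * x i by ext; simp]
    exact h.trans (by simp only [dotProduct, Finset.mul_sum, sq, mul_comm])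
  have h := (hindep.hasGaussianLaw_fun_sum hgauss).map_eq_gaussianReal
  rwa [hmean, hvar, Real.toNNReal_mul r.coe_nonneg, Real.toNNReal_coe] at h

/-- The recentred squared norm `‖b‖² - m r` of a vector in `ℝ^m`. -/
noncomputable def sqDev (m : ℕ) (r : NNReal) (b : Fin m → ℝ) : ℝ := ∑ j, (b j) ^ 2 - m * r

theorem sqDev_eq_sum (m : ℕ) (r : NNReal) (b : Fin m → ℝ) :
    sqDev m r b = ∑ j, ((b j) ^ 2 - r) := by
  simp [sqDev]

theorem sqDev_neg (m : ℕ) (r : NNReal) (b : Fin m → ℝ) : sqDev m r (-b) = sqDev m r b := by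
  simp [sqDev]

theorem measurable_sqDev (m : ℕ) (r : NNReal) : Measurable (sqDev m r) := by
  unfold sqDev; fun_prop

theorem hasSubgammaMGF_sqDev (m : ℕ) (r : NNReal) :
    HasSubgammaMGF (sqDev m r) 0 (2 * m * (r : ℝ) ^ 2) (4 * r) (gaussVec m r) := by
  have h := (hasSubgammaMGF_sq_gaussianReal r).weighted_sum_pi (by fun_prop)
    (c := fun _ : Fin m ↦ 1) (ρ' := 4 * r) (by simp)
  have hfun : (fun ω : Fin m → ℝ ↦ ∑ i, 1 * (ω i ^ 2 - (r : ℝ))) = sqDev m r := by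
    ext ω; simp [sqDev]
  rw [hfun] at h
  exact h.mono (by simp [mul_right_comm]) le_rfl

theorem hasSubgammaMGF_dotProduct (r : NNReal) (hx : x ⬝ᵥ x ≤ 1) :
    HasSubgammaMGF (fun b ↦ b ⬝ᵥ x) 0 (r / 2) 0 (gaussVec m r) := by
  have h := (hasSubgammaMGF_id_gaussianReal r).weighted_sum_pi measurable_id (c := x)
    (ρ' := 0) (by simp)
  have hfun : (fun ω : Fin m → ℝ ↦ ∑ i, x i * (id (ω i) - 0)) = fun b ↦ b ⬝ᵥ x := by
    ext ω; simp [dotProduct, mul_comm]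
  have hsq : ∑ i, x i ^ 2 = x ⬝ᵥ x := by simp only [dotProduct, sq]
  rw [hfun, hsq] at h
  exact h.mono (mul_le_of_le_one_right (by positivity) hx) le_rfl

theorem hasSubgammaMGF_dotProduct_sq (r : NNReal) (hx : x ⬝ᵥ x ≤ 1) :
    HasSubgammaMGF (fun b ↦ (b ⬝ᵥ x) ^ 2) (r * (x ⬝ᵥ x)) (2 * (r : ℝ) ^ 2) (4 * r)
      (gaussVec m r) := by
  have hx0 : 0 ≤ x ⬝ᵥ x := Finset.sum_nonneg fun i _ ↦ mul_self_nonneg _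
  have hrx : (r : ℝ) * (x ⬝ᵥ x) ≤ r := mul_le_of_le_one_right r.coe_nonneg hx
  have h := (hasSubgammaMGF_sq_gaussianReal (r * (x ⬝ᵥ x).toNNReal)).comp_measurePreserving
    ⟨measurable_dotProduct_const x, gaussVec_map_dotProduct m r x⟩
  rw [NNReal.coe_mul, Real.coe_toNNReal _ hx0] at h
  exact h.mono (by gcongr) (by gcongr)

theorem integrable_exp_dotProduct_sq (hr : r ≠ 0) (hx : x ⬝ᵥ x ≤ 1) :
    Integrable (fun b ↦ Real.exp ((b ⬝ᵥ x) ^ 2 / (4 * r))) (gaussVec m r) := by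
  have : (0 : ℝ) < r := by positivity
  have h := (hasSubgammaMGF_dotProduct_sq r hx).integrable_exp_mul (s := 1 / (4 * r))
    (by rw [abs_of_pos (by positivity), one_div_mul_cancel (by positivity)])
  simpa only [one_div_mul_eq_div] using h

theorem integral_exp_dotProduct_sq_le_two (hr : r ≠ 0) (hx : x ⬝ᵥ x ≤ 1) :
    ∫ b, Real.exp ((b ⬝ᵥ x) ^ 2 / (4 * r)) ∂gaussVec m r ≤ 2 := by
  have : (0 : ℝ) < r := by positivity
  have h := (hasSubgammaMGF_dotProduct_sq r hx).mgf_le (s := 1 / (4 * r))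
    (by rw [abs_of_pos (by positivity), one_div_mul_cancel (by positivity)])
  simp only [mgf, one_div_mul_eq_div] at h
  calc _ ≤ _ := h
    _ = Real.exp ((x ⬝ᵥ x) / 4 + 1 / 8) := by congr 1; field_simp; ring
    _ ≤ Real.exp (Real.log 2) := by gcongr; linarith [Real.log_two_gt_d9]
    _ = 2 := Real.exp_log two_pos

/-- The factor depending on the `l`-th coordinate in the product `(b_k² - r) b_i b_j`. -/
noncomputable def sqDevMulFactor (r : NNReal) (k i j l : Fin m) (y : ℝ) : ℝ :=
  (if l = k then y ^ 2 - (r : ℝ) else 1) * (if l = i then y else 1) * (if l = j then y else 1)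

theorem sq_sub_mul_mul_eq_prod (r : NNReal) (k i j : Fin m) (b : Fin m → ℝ) :
    ((b k) ^ 2 - r) * b i * b j = ∏ l, sqDevMulFactor r k i j l (b l) := by
  simp only [sqDevMulFactor, Finset.prod_mul_distrib]
  simp

theorem integrable_sqDevMulFactor (r : NNReal) (k i j l : Fin m) :
    Integrable (sqDevMulFactor r k i j l) (gaussianReal 0 r) := by
  have hp := integrable_pow_gaussianReal r
  unfold sqDevMulFactor
  split_ifs
  · exact ((hp 4).sub ((hp 2).const_mul r)).congr (.of_forall fun y ↦ by simp; ring)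
  · exact ((hp 3).sub ((hp 1).const_mul r)).congr (.of_forall fun y ↦ by simp; ring)
  · exact ((hp 3).sub ((hp 1).const_mul r)).congr (.of_forall fun y ↦ by simp; ring)
  · exact ((hp 2).sub ((hp 0).const_mul r)).congr (.of_forall fun y ↦ by simp)
  · exact (hp 2).congr (.of_forall fun y ↦ by ring)
  · exact (hp 1).congr (.of_forall fun y ↦ by simp)
  · exact (hp 1).congr (.of_forall fun y ↦ by simp)
  · exact (hp 0).congr (.of_forall fun y ↦ by simp)

theorem integrable_sq_sub_mul_mul (r : NNReal) (k i j : Fin m) :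
    Integrable (fun b ↦ ((b k) ^ 2 - (r : ℝ)) * b i * b j) (gaussVec m r) := by
  simp only [sq_sub_mul_mul_eq_prod]
  exact Integrable.fintype_prod (integrable_sqDevMulFactor r k i j)

theorem integral_sq_sub_gaussianReal (r : NNReal) :
    ∫ y : ℝ, (y ^ 2 - (r : ℝ)) ∂gaussianReal 0 r = 0 := by
  rw [integral_sub (integrable_pow_gaussianReal r 2) (integrable_const _),
    integral_sq_gaussianReal]
  simp

theorem integral_sq_sub_mul_mul_gaussianReal (r : NNReal) :
    ∫ y : ℝ, (y ^ 2 - (r : ℝ)) * y * y ∂gaussianReal 0 r = 2 * r ^ 2 := by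
  have hexp (y : ℝ) : (y ^ 2 - (r : ℝ)) * y * y = y ^ 4 - r * y ^ 2 := by ring
  simp only [hexp]
  rw [integral_sub (integrable_pow_gaussianReal r 4)
    ((integrable_pow_gaussianReal r 2).const_mul _), integral_const_mul,
    integral_sq_gaussianReal, integral_pow_four_gaussianReal]
  ring

theorem integral_sq_sub_mul_mul (r : NNReal) (k i j : Fin m) :
    ∫ b, ((b k) ^ 2 - r) * b i * b j ∂gaussVec m r =
      if i = j then if i = k then 2 * (r : ℝ) ^ 2 else 0 else 0 := by
  simp only [sq_sub_mul_mul_eq_prod]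
  rw [gaussVec, integral_fintype_prod_eq_prod]
  split_ifs with hij hik
  · subst hij hik
    rw [Finset.prod_eq_single i (fun l _ hl ↦ by simp [sqDevMulFactor, hl]) (by simp)]
    simpa only [sqDevMulFactor, if_true] using integral_sq_sub_mul_mul_gaussianReal r
  · subst hij
    refine Finset.prod_eq_zero (Finset.mem_univ k) ?_
    simpa only [sqDevMulFactor, if_true, if_neg (Ne.symm hik), mul_one] using
      integral_sq_sub_gaussianReal r
  · by_cases hik : i = k
    · refine Finset.prod_eq_zero (Finset.mem_univ j) ?_
      simp [sqDevMulFactor, Ne.symm hij, show j ≠ k from hik ▸ Ne.symm hij]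
    · refine Finset.prod_eq_zero (Finset.mem_univ i) ?_
      simp [sqDevMulFactor, hij, hik]

theorem integral_sqDev_mul_dotProduct_sq (m : ℕ) (r : NNReal) (x : Fin m → ℝ) :
    ∫ b, sqDev m r b * (b ⬝ᵥ x) ^ 2 ∂gaussVec m r = 2 * (r : ℝ) ^ 2 * (x ⬝ᵥ x) := by
  have hexpand (b : Fin m → ℝ) : sqDev m r b * (b ⬝ᵥ x) ^ 2 =
      ∑ k, ∑ i, ∑ j, x i * x j * (((b k) ^ 2 - r) * b i * b j) := by
    rw [sqDev_eq_sum, sq, dotProduct, Finset.sum_mul_sum, Finset.sum_mul]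
    refine Finset.sum_congr rfl fun k _ ↦ ?_
    simp only [Finset.mul_sum]
    exact Finset.sum_congr rfl fun i _ ↦ Finset.sum_congr rfl fun j _ ↦ by ring
  have hint (k i j : Fin m) := (integrable_sq_sub_mul_mul r k i j).const_mul (x i * x j)
  simp only [hexpand]
  rw [integral_finsetSum _ fun k _ ↦ integrable_finsetSum _ fun i _ ↦
    integrable_finsetSum _ fun j _ ↦ hint k i j, dotProduct, Finset.mul_sum]
  refine Finset.sum_congr rfl fun k _ ↦ ?_
  rw [integral_finsetSum _ fun i _ ↦ integrable_finsetSum _ fun j _ ↦ hint k i j]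
  simp only [integral_finsetSum _ fun j _ ↦ hint k _ j, integral_const_mul,
    integral_sq_sub_mul_mul]
  simp [mul_comm]

end GaussVec

section Envelope

variable {m : ℕ} {r : NNReal} {n : ℝ} {x : Fin m → ℝ}

theorem pow_four_div_le_exp_add_exp_neg (y : ℝ) : y ^ 4 / 24 ≤ Real.exp y + Real.exp (-y) := by
  have hpow := Real.pow_div_factorial_le_exp |y| (abs_nonneg y) 4
  have hexp : Real.exp |y| ≤ Real.exp y + Real.exp (-y) := by
    rcases abs_choice y with h | h <;> rw [h] <;> linarith [Real.exp_pos y, Real.exp_pos (-y)]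
  norm_num [Nat.factorial, Even.pow_abs (show Even 4 by decide)] at hpow
  linarith

theorem sq_pow_mul_exp_le {q : ℝ} (hq : 0 ≤ q) {k : ℕ} (hk : k ≤ 2) :
    (q ^ k * Real.exp (q / 16)) ^ 2 ≤ 98304 * Real.exp (q / 4) := by
  have hpow := Real.pow_div_factorial_le_exp (q / 8) (by positivity) (2 * k)
  have hconst : (64 ^ k * (2 * k).factorial : ℝ) ≤ 98304 := by
    interval_cases k <;> norm_num [Nat.factorial]
  have hsplit : Real.exp (q / 4) = Real.exp (q / 8) * Real.exp (q / 8) := by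
    rw [← Real.exp_add]; ring_nf
  calc (q ^ k * Real.exp (q / 16)) ^ 2
      = 64 ^ k * (2 * k).factorial * ((q / 8) ^ (2 * k) / (2 * k).factorial) *
          Real.exp (q / 8) := by
        rw [mul_pow, ← Real.exp_nat_mul, mul_assoc (64 ^ k : ℝ), mul_div_cancel₀ _ (by positivity),
          div_pow, pow_mul (8 : ℝ), show (8 : ℝ) ^ 2 = 64 by norm_num,
          mul_div_cancel₀ _ (by positivity), ← pow_mul, mul_comm k]
        push_cast
        ring_nf
    _ ≤ 98304 * Real.exp (q / 8) * Real.exp (q / 8) := by gcongr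
    _ = 98304 * Real.exp (q / 4) := by rw [hsplit, mul_assoc]

theorem mgf_sqDev_le_two (hn : 1 ≤ n) (hmn : m ≤ n) {s : ℝ} (hs : |s| * (4 * r * √n) ≤ 1) :
    mgf (sqDev m r) (gaussVec m r) s ≤ 2 := by
  have hs' : |s| * (4 * r) ≤ 1 := by
    refine le_trans ?_ hs
    exact mul_le_mul_of_nonneg_left
      (le_mul_of_one_le_right (by positivity) (Real.one_le_sqrt.2 hn)) (abs_nonneg s)
  have hsq : s ^ 2 * (16 * (r : ℝ) ^ 2 * n) ≤ 1 := by
    have h := pow_le_one₀ (by positivity) hs (n := 2)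
    rw [mul_pow, mul_pow, mul_pow, sq_abs, Real.sq_sqrt (by linarith)] at h
    linarith
  have hm : s ^ 2 * (16 * (r : ℝ) ^ 2 * m) ≤ 1 := le_trans (by gcongr) hsq
  calc mgf (sqDev m r) (gaussVec m r) s ≤ Real.exp (s * 0 + s ^ 2 * (2 * m * (r : ℝ) ^ 2)) :=
        (hasSubgammaMGF_sqDev m r).mgf_le hs'
    _ ≤ Real.exp (Real.log 2) := by gcongr; linarith [Real.log_two_gt_d9]
    _ = 2 := Real.exp_log two_pos

theorem integrable_exp_mul_sqDev (hn : 1 ≤ n) {s : ℝ} (hs : |s| * (4 * r * √n) ≤ 1) :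
    Integrable (fun b ↦ Real.exp (s * sqDev m r b)) (gaussVec m r) := by
  refine (hasSubgammaMGF_sqDev m r).integrable_exp_mul (le_trans ?_ hs)
  exact mul_le_mul_of_nonneg_left
    (le_mul_of_one_le_right (by positivity) (Real.one_le_sqrt.2 hn)) (abs_nonneg s)

/-- An integrable function of the Gaussian vector `b` dominating the moments of `‖b‖² - m r` (at
scale `r √n`) and of the linear functional `b ⬝ᵥ x` (at scale `√r`). -/
noncomputable def expEnvelope (m : ℕ) (r : NNReal) (n : ℝ) (x b : Fin m → ℝ) : ℝ :=
  Real.exp ((4 * r * √n)⁻¹ * sqDev m r b) + Real.exp (-(4 * r * √n)⁻¹ * sqDev m r b) +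
    Real.exp ((b ⬝ᵥ x) ^ 2 / (4 * r))

theorem abs_inv_mul_self_le_one {a : ℝ} (ha : 0 ≤ a) : |a⁻¹| * a ≤ 1 := by
  rw [abs_of_nonneg (inv_nonneg.2 ha)]
  exact inv_mul_le_one

theorem integrable_expEnvelope (hr : r ≠ 0) (hn : 1 ≤ n) (hx : x ⬝ᵥ x ≤ 1) :
    Integrable (expEnvelope m r n x) (gaussVec m r) := by
  have hs : |(4 * r * √n)⁻¹| * (4 * r * √n) ≤ 1 := abs_inv_mul_self_le_one (by positivity)
  exact ((integrable_exp_mul_sqDev hn hs).add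
    (integrable_exp_mul_sqDev hn (by rwa [abs_neg]))).add (integrable_exp_dotProduct_sq hr hx)

theorem integral_expEnvelope_le (hr : r ≠ 0) (hn : 1 ≤ n) (hmn : m ≤ n) (hx : x ⬝ᵥ x ≤ 1) :
    ∫ b, expEnvelope m r n x b ∂gaussVec m r ≤ 6 := by
  have hs : |(4 * r * √n)⁻¹| * (4 * r * √n) ≤ 1 := abs_inv_mul_self_le_one (by positivity)
  have hs' : |-(4 * r * √n)⁻¹| * (4 * r * √n) ≤ 1 := by rwa [abs_neg]
  have hint := integrable_exp_mul_sqDev (m := m) hn hs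
  have hint' := integrable_exp_mul_sqDev (m := m) hn hs'
  have h₁ := mgf_sqDev_le_two hn hmn hs
  have h₂ := mgf_sqDev_le_two hn hmn hs'
  have h₃ := integral_exp_dotProduct_sq_le_two hr hx
  unfold expEnvelope
  rw [integral_add (by exact hint.add hint') (integrable_exp_dotProduct_sq hr hx),
    integral_add hint hint']
  simp only [mgf] at h₁ h₂
  linarith

theorem sqDev_pow_four_le_expEnvelope (hr : r ≠ 0) (hn : 1 ≤ n) (x b : Fin m → ℝ) :
    sqDev m r b ^ 4 ≤ 6144 * (n * r ^ 2) ^ 2 * expEnvelope m r n x b := by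
  have : (0 : ℝ) < r := by positivity
  have hsqrt : √n ^ 4 = n ^ 2 := by
    rw [show 4 = 2 * 2 by norm_num, pow_mul, Real.sq_sqrt (by linarith)]
  have h := pow_four_div_le_exp_add_exp_neg ((4 * r * √n)⁻¹ * sqDev m r b)
  have hE := Real.exp_pos ((b ⬝ᵥ x) ^ 2 / (4 * r))
  calc sqDev m r b ^ 4
      = 6144 * (n * r ^ 2) ^ 2 * (((4 * r * √n)⁻¹ * sqDev m r b) ^ 4 / 24) := by
        rw [mul_pow (4 * r * √n)⁻¹, inv_pow, mul_pow (4 * (r : ℝ)), hsqrt]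
        field_simp
        ring
    _ ≤ _ := by
        gcongr
        rw [expEnvelope, neg_mul]
        linarith

theorem sqDev_sq_mul_pow_mul_exp_le (hr : r ≠ 0) (hn : 1 ≤ n) {k : ℕ} (hk : k ≤ 2)
    (x b : Fin m → ℝ) :
    sqDev m r b ^ 2 * (((b ⬝ᵥ x) ^ 2) ^ k * Real.exp ((b ⬝ᵥ x) ^ 2 / (16 * r))) ≤
      50000 * n * (r : ℝ) ^ (k + 2) * expEnvelope m r n x b := by
  have : (0 : ℝ) < r := by positivity
  set q := (b ⬝ᵥ x) ^ 2 / r with hq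
  set X := q ^ k * Real.exp (q / 16) with hX
  set c := n * (r : ℝ) ^ 2
  set W := expEnvelope m r n x b with hW
  have hc : 0 < c := by positivity
  have hdev : sqDev m r b ^ 4 ≤ 6144 * c ^ 2 * W := sqDev_pow_four_le_expEnvelope hr hn x b
  have hXW : X ^ 2 ≤ 98304 * W := by
    refine (sq_pow_mul_exp_le (by positivity) hk).trans ?_
    gcongr
    rw [hW, expEnvelope, hq, div_div, mul_comm (r : ℝ)]
    exact le_add_of_nonneg_left (by positivity)
  have hW0 : 0 ≤ W := by linarith [sq_nonneg X]
  have hbound : sqDev m r b ^ 2 * X ≤ 50000 * c * W := by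
    refine le_of_mul_le_mul_left ?_ hc
    -- AM-GM for `sqDev²` and `c X`, with the weight that balances the two envelope constants
    linarith [sq_nonneg (4 * sqDev m r b ^ 2 - c * X), mul_nonneg (sq_nonneg c) hW0,
      mul_le_mul_of_nonneg_left hXW (sq_nonneg c)]
  calc _ = (r : ℝ) ^ k * (sqDev m r b ^ 2 * X) := by
        rw [hX, hq, div_pow, div_div, mul_comm (r : ℝ) 16]
        field_simp
    _ ≤ (r : ℝ) ^ k * (50000 * c * W) := by gcongr
    _ = _ := by ring

end Envelope

section TruncDev

variable {m : ℕ} {r : NNReal} {n G : ℝ} {x : Fin m → ℝ}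

/-- The truncation of `sqDev` at level `G`; it makes the products with powers of `b ⬝ᵥ x`, which
are not subgamma themselves, subgamma. -/
noncomputable def truncDev (m : ℕ) (r : NNReal) (G : ℝ) (b : Fin m → ℝ) : ℝ :=
  if |sqDev m r b| ≤ G then sqDev m r b else 0

theorem measurable_truncDev (m : ℕ) (r : NNReal) (G : ℝ) : Measurable (truncDev m r G) :=
  Measurable.ite (measurableSet_le (measurable_sqDev m r).abs measurable_const)
    (measurable_sqDev m r) measurable_const

theorem measurable_truncDev_mul_dotProduct_pow (m : ℕ) (r : NNReal) (G : ℝ) (x : Fin m → ℝ)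
    (k : ℕ) : Measurable fun b ↦ truncDev m r G b * (b ⬝ᵥ x) ^ k :=
  (measurable_truncDev m r G).mul ((measurable_dotProduct_const x).pow_const k)

theorem measurable_truncDev_mul_dotProduct (m : ℕ) (r : NNReal) (G : ℝ) (x : Fin m → ℝ) :
    Measurable fun b ↦ truncDev m r G b * (b ⬝ᵥ x) := by
  simpa only [pow_one] using measurable_truncDev_mul_dotProduct_pow m r G x 1

theorem abs_truncDev_le (hG : 0 ≤ G) (b : Fin m → ℝ) : |truncDev m r G b| ≤ G := by
  unfold truncDev
  split_ifs with h
  · exact h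
  · simpa using hG

theorem sq_truncDev_le (m : ℕ) (r : NNReal) (G : ℝ) (b : Fin m → ℝ) :
    truncDev m r G b ^ 2 ≤ sqDev m r b ^ 2 := by
  unfold truncDev
  split_ifs
  · exact le_rfl
  · simpa using sq_nonneg _

theorem truncDev_neg_mul_neg_dotProduct (m : ℕ) (r : NNReal) (G : ℝ) (b x : Fin m → ℝ) :
    truncDev m r G (-b) * (-b ⬝ᵥ x) = -(truncDev m r G b * (b ⬝ᵥ x)) := by
  simp [truncDev, sqDev_neg]

theorem integral_truncDev_mul_dotProduct (m : ℕ) (r : NNReal) (G : ℝ) (x : Fin m → ℝ) :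
    ∫ b, truncDev m r G b * (b ⬝ᵥ x) ∂gaussVec m r = 0 := by
  have h := integral_neg_eq_self (fun b ↦ truncDev m r G b * (b ⬝ᵥ x)) (gaussVec m r)
  simp only [truncDev_neg_mul_neg_dotProduct, integral_neg] at h
  linarith

theorem mgf_truncDev_mul_dotProduct_neg (m : ℕ) (r : NNReal) (G : ℝ) (x : Fin m → ℝ) (s : ℝ) :
    mgf (fun b ↦ truncDev m r G b * (b ⬝ᵥ x)) (gaussVec m r) (-s) =
      mgf (fun b ↦ truncDev m r G b * (b ⬝ᵥ x)) (gaussVec m r) s := by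
  have h := integral_neg_eq_self (fun b ↦ Real.exp (s * (truncDev m r G b * (b ⬝ᵥ x))))
    (gaussVec m r)
  simp only [truncDev_neg_mul_neg_dotProduct, mul_neg] at h
  simpa only [mgf, neg_mul] using h

theorem exp_abs_mul_truncDev_mul_dotProduct_le (hr : r ≠ 0) (hG : 0 ≤ G) {s : ℝ}
    (hs : |s| * (4 * (G * √r)) ≤ 1) (x b : Fin m → ℝ) :
    Real.exp |s * (truncDev m r G b * (b ⬝ᵥ x))| ≤ 2 * Real.exp ((b ⬝ᵥ x) ^ 2 / (16 * r)) := by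
  have hr0 : (0 : ℝ) < r := by positivity
  set q := |b ⬝ᵥ x| / √r with hq
  have hd : |b ⬝ᵥ x| = √r * q := by rw [hq]; field_simp
  have hq2 : (b ⬝ᵥ x) ^ 2 / (16 * r) = q ^ 2 / 16 := by
    rw [hq, div_pow, sq_abs, Real.sq_sqrt hr0.le, div_div, mul_comm (16 : ℝ)]
  have habs : |s * (truncDev m r G b * (b ⬝ᵥ x))| ≤ q / 4 := by
    calc _ = |s| * (|truncDev m r G b| * |b ⬝ᵥ x|) := by rw [abs_mul, abs_mul]
      _ ≤ |s| * (G * |b ⬝ᵥ x|) := by gcongr; exact abs_truncDev_le hG b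
      _ = |s| * (4 * (G * √r)) * (q / 4) := by rw [hd]; ring
      _ ≤ q / 4 := mul_le_of_le_one_left (by positivity) hs
  rw [hq2]
  calc Real.exp |s * (truncDev m r G b * (b ⬝ᵥ x))| ≤ Real.exp (Real.log 2 + q ^ 2 / 16) := by
        gcongr
        linarith [sq_nonneg (q - 2), Real.log_two_gt_d9]
    _ = 2 * Real.exp (q ^ 2 / 16) := by rw [Real.exp_add, Real.exp_log two_pos]

theorem hasSubgammaMGF_truncDev_mul_dotProduct_of_moment (hr : r ≠ 0) (hn : 1 ≤ n) (hmn : m ≤ n)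
    (hG : 0 ≤ G) (hx : x ⬝ᵥ x ≤ 1) :
    HasSubgammaMGF (fun b ↦ truncDev m r G b * (b ⬝ᵥ x)) 0 (600000 * n * (r : ℝ) ^ 3)
      (4 * (G * √r)) (gaussVec m r) := by
  rw [← integral_truncDev_mul_dotProduct m r G x]
  refine .of_sq_mul_exp_abs_le (measurable_truncDev_mul_dotProduct m r G x).aemeasurable
    ((integrable_expEnvelope hr hn hx).const_mul (100000 * n * (r : ℝ) ^ 3)) ?_ fun s hs b ↦ ?_
  · rw [integral_const_mul]
    calc _ ≤ 100000 * n * (r : ℝ) ^ 3 * 6 := by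
          gcongr; exact integral_expEnvelope_le hr hn hmn hx
      _ = _ := by ring
  · calc _ ≤ (sqDev m r b ^ 2 * (b ⬝ᵥ x) ^ 2) * (2 * Real.exp ((b ⬝ᵥ x) ^ 2 / (16 * r))) := by
          rw [mul_pow]
          gcongr ?_ * _ * ?_
          · exact sq_truncDev_le m r G b
          · exact exp_abs_mul_truncDev_mul_dotProduct_le hr hG hs x b
      _ ≤ _ := by linarith [sqDev_sq_mul_pow_mul_exp_le hr hn one_le_two x b]

theorem hasSubgammaMGF_truncDev_mul_dotProduct (r : NNReal) (hG : 0 ≤ G) (hx : x ⬝ᵥ x ≤ 1) :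
    HasSubgammaMGF (fun b ↦ truncDev m r G b * (b ⬝ᵥ x)) 0 (G ^ 2 * (r / 2)) 0
      (gaussVec m r) := by
  have h := (hasSubgammaMGF_dotProduct r hx).const_mul (c := G) (ρ' := 0) (by simp)
  rw [mul_zero] at h
  refine h.of_abs_le (measurable_truncDev_mul_dotProduct m r G x).aemeasurable
    (mgf_truncDev_mul_dotProduct_neg m r G x) fun b ↦ ?_
  rw [abs_mul, abs_mul, abs_of_nonneg hG]
  gcongr
  exact abs_truncDev_le hG b

theorem abs_mul_truncDev_mul_dotProduct_sq_le (hr : r ≠ 0) (hG : 0 ≤ G) {s : ℝ}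
    (hs : |s| * (16 * (G * r)) ≤ 1) (x b : Fin m → ℝ) :
    |s * (truncDev m r G b * (b ⬝ᵥ x) ^ 2)| ≤ (b ⬝ᵥ x) ^ 2 / (16 * r) := by
  have : (0 : ℝ) < r := by positivity
  calc _ = |s| * (|truncDev m r G b| * (b ⬝ᵥ x) ^ 2) := by
        rw [abs_mul, abs_mul, abs_of_nonneg (sq_nonneg (b ⬝ᵥ x))]
    _ ≤ |s| * (G * (b ⬝ᵥ x) ^ 2) := by gcongr; exact abs_truncDev_le hG b
    _ = |s| * (16 * (G * r)) * ((b ⬝ᵥ x) ^ 2 / (16 * r)) := by field_simp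
    _ ≤ _ := mul_le_of_le_one_left (by positivity) hs

theorem hasSubgammaMGF_truncDev_mul_dotProduct_sq (hr : r ≠ 0) (hn : 1 ≤ n) (hmn : m ≤ n)
    (hG : 0 ≤ G) (hx : x ⬝ᵥ x ≤ 1) :
    HasSubgammaMGF (fun b ↦ truncDev m r G b * (b ⬝ᵥ x) ^ 2)
      (∫ b, truncDev m r G b * (b ⬝ᵥ x) ^ 2 ∂gaussVec m r)
      (300000 * n * (r : ℝ) ^ 4) (16 * (G * r)) (gaussVec m r) := by
  refine .of_sq_mul_exp_abs_le (measurable_truncDev_mul_dotProduct_pow m r G x 2).aemeasurable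
    ((integrable_expEnvelope hr hn hx).const_mul (50000 * n * (r : ℝ) ^ 4)) ?_ fun s hs b ↦ ?_
  · rw [integral_const_mul]
    calc _ ≤ 50000 * n * (r : ℝ) ^ 4 * 6 := by
          gcongr; exact integral_expEnvelope_le hr hn hmn hx
      _ = _ := by ring
  · calc _ ≤ (sqDev m r b ^ 2 * ((b ⬝ᵥ x) ^ 2) ^ 2) *
          Real.exp ((b ⬝ᵥ x) ^ 2 / (16 * r)) := by
          rw [mul_pow]
          gcongr ?_ * _ * Real.exp ?_
          · exact sq_truncDev_le m r G b
          · exact abs_mul_truncDev_mul_dotProduct_sq_le hr hG hs x b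
      _ ≤ _ := by linarith [sqDev_sq_mul_pow_mul_exp_le hr hn le_rfl x b]

theorem sq_sqDev_mul_dotProduct_sq_le (hr : r ≠ 0) (hn : 1 ≤ n) (x b : Fin m → ℝ) :
    (sqDev m r b * (b ⬝ᵥ x) ^ 2) ^ 2 ≤ 50000 * n * (r : ℝ) ^ 4 * expEnvelope m r n x b := by
  refine le_trans ?_ (sqDev_sq_mul_pow_mul_exp_le hr hn le_rfl x b)
  rw [mul_pow]
  gcongr
  exact le_mul_of_one_le_right (by positivity) (Real.one_le_exp (by positivity))

theorem integrable_sqDev_mul_dotProduct_sq (hr : r ≠ 0) (hn : 1 ≤ n) (hx : x ⬝ᵥ x ≤ 1) :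
    Integrable (fun b ↦ sqDev m r b * (b ⬝ᵥ x) ^ 2) (gaussVec m r) :=
  integrable_of_sq_le
    ((measurable_sqDev m r).mul ((measurable_dotProduct_const x).pow_const 2)).aestronglyMeasurable
    ((integrable_expEnvelope hr hn hx).const_mul _) (sq_sqDev_mul_dotProduct_sq_le hr hn x)

theorem integrable_truncDev_mul_dotProduct_sq (hr : r ≠ 0) (hn : 1 ≤ n) (hx : x ⬝ᵥ x ≤ 1) :
    Integrable (fun b ↦ truncDev m r G b * (b ⬝ᵥ x) ^ 2) (gaussVec m r) := by
  refine (integrable_sqDev_mul_dotProduct_sq hr hn hx).mono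
    (measurable_truncDev_mul_dotProduct_pow m r G x 2).aestronglyMeasurable (.of_forall fun b ↦ ?_)
  rw [Real.norm_eq_abs, Real.norm_eq_abs, abs_mul, abs_mul]
  exact mul_le_mul_of_nonneg_right (sq_le_sq.1 (sq_truncDev_le m r G b)) (abs_nonneg _)

theorem abs_truncDev_sub_sqDev_mul_dotProduct_sq_le (hr : r ≠ 0) (hn : 1 ≤ n) (G : ℝ)
    (x b : Fin m → ℝ) :
    |truncDev m r G b * (b ⬝ᵥ x) ^ 2 - sqDev m r b * (b ⬝ᵥ x) ^ 2| ≤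
      {b | G < |sqDev m r b|}.indicator (fun _ ↦ (r : ℝ)) b +
        50000 * n * (r : ℝ) ^ 3 * expEnvelope m r n x b := by
  have hr0 : (0 : ℝ) < r := by positivity
  set W := 50000 * n * (r : ℝ) ^ 3 * expEnvelope m r n x b with hW
  have hsq : (sqDev m r b * (b ⬝ᵥ x) ^ 2) ^ 2 ≤ r * W :=
    (sq_sqDev_mul_dotProduct_sq_le hr hn x b).trans_eq (by rw [hW]; ring)
  have hW0 : 0 ≤ W := nonneg_of_mul_nonneg_right ((sq_nonneg _).trans hsq) hr0
  by_cases hb : |sqDev m r b| ≤ G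
  · simpa [truncDev, hb, not_lt.2 hb] using hW0
  · simp only [truncDev, hb, if_false, zero_mul, zero_sub, abs_neg,
      Set.indicator_of_mem (show b ∈ {b | G < |sqDev m r b|} from not_le.1 hb)]
    refine abs_le_of_sq_le_sq (hsq.trans ?_) (by positivity)
    nlinarith [mul_nonneg hr0.le hW0]

theorem abs_integral_truncDev_sub_le (hr : r ≠ 0) (hn : 1 ≤ n) (hmn : m ≤ n) (G : ℝ)
    (hx : x ⬝ᵥ x ≤ 1) :
    |∫ b, truncDev m r G b * (b ⬝ᵥ x) ^ 2 ∂gaussVec m r - 2 * (r : ℝ) ^ 2 * (x ⬝ᵥ x)| ≤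
      300000 * n * (r : ℝ) ^ 3 + r * (gaussVec m r).real {b | G < |sqDev m r b|} := by
  have hmeas : MeasurableSet {b : Fin m → ℝ | G < |sqDev m r b|} :=
    measurableSet_lt measurable_const (measurable_sqDev m r).abs
  have hind : Integrable ({b | G < |sqDev m r b|}.indicator fun _ ↦ (r : ℝ)) (gaussVec m r) :=
    (integrable_const _).indicator hmeas
  have henv := (integrable_expEnvelope hr hn hx).const_mul (50000 * n * (r : ℝ) ^ 3)
  rw [← integral_sqDev_mul_dotProduct_sq, ← integral_sub
    (integrable_truncDev_mul_dotProduct_sq hr hn hx) (integrable_sqDev_mul_dotProduct_sq hr hn hx)]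
  rw [← Real.norm_eq_abs]
  calc _ ≤ ∫ b, ({b | G < |sqDev m r b|}.indicator (fun _ ↦ (r : ℝ)) b +
          50000 * n * (r : ℝ) ^ 3 * expEnvelope m r n x b) ∂gaussVec m r :=
        norm_integral_le_of_norm_le (hind.add henv)
          (.of_forall (abs_truncDev_sub_sqDev_mul_dotProduct_sq_le hr hn G x))
    _ = r * (gaussVec m r).real {b | G < |sqDev m r b|} +
          50000 * n * (r : ℝ) ^ 3 * ∫ b, expEnvelope m r n x b ∂gaussVec m r := by
        rw [integral_add hind henv, integral_indicator_const _ hmeas, integral_const_mul,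
          smul_eq_mul, mul_comm]
    _ ≤ r * (gaussVec m r).real {b | G < |sqDev m r b|} + 50000 * n * (r : ℝ) ^ 3 * 6 := by
        gcongr
        exact integral_expEnvelope_le hr hn hmn hx
    _ = _ := by ring

end TruncDev

theorem gaussBasis_apply_dotProduct_self {N m : ℕ} (v : Fin N → ℝ) (B : Fin N → Fin m → ℝ)
    (i : Fin N) : gaussBasis (n := m + 1) v B i ⬝ᵥ gaussBasis (n := m + 1) v B i =
      v i ^ 2 + ∑ j, B i j ^ 2 := by
  change rowCat _ _ ⬝ᵥ rowCat _ _ = _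
  rw [rowCat_eq_vecCons, cons_dotProduct_cons]
  simp only [dotProduct, sq]

theorem dotProduct_specMat_gaussBasis_mulVec_sub {N m : ℕ} (hN : N ≠ 0) (v : Fin N → ℝ)
    (B : Fin N → Fin m → ℝ) (w : Fin (m + 1) → ℝ) :
    w ⬝ᵥ specMat (gaussBasis (n := m + 1) v B) *ᵥ w - (∑ i, v i ^ 4 - 3 / N) * w 0 ^ 2 =
      w 0 ^ 2 * ∑ i, v i ^ 2 * sqDev m (N : NNReal)⁻¹ (B i) +
      2 * w 0 * ∑ i, v i ^ 3 * (B i ⬝ᵥ Fin.tail w) +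
      2 * w 0 * ∑ i, v i * (sqDev m (N : NNReal)⁻¹ (B i) * (B i ⬝ᵥ Fin.tail w)) +
      ∑ i, v i ^ 2 * ((B i ⬝ᵥ Fin.tail w) ^ 2 - (N : ℝ)⁻¹ * (Fin.tail w ⬝ᵥ Fin.tail w)) +
      (∑ i, sqDev m (N : NNReal)⁻¹ (B i) * (B i ⬝ᵥ Fin.tail w) ^ 2 -
        2 * (N : ℝ)⁻¹ * (Fin.tail w ⬝ᵥ Fin.tail w)) +
      (∑ i, v i ^ 2 - 1) * (N : ℝ)⁻¹ * (Fin.tail w ⬝ᵥ Fin.tail w) := by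
  have : (N : ℝ) ≠ 0 := by positivity
  have hw := dotProduct_self_eq_sq_add_tail w
  set xx := Fin.tail w ⬝ᵥ Fin.tail w
  have hterm (i : Fin N) :
      (gaussBasis (n := m + 1) v B i ⬝ᵥ gaussBasis (n := m + 1) v B i -
        (((m + 1 : ℕ) : ℝ) - 1) / N) * (gaussBasis (n := m + 1) v B i ⬝ᵥ w) ^ 2 =
      w 0 ^ 2 * v i ^ 4 + w 0 ^ 2 * (v i ^ 2 * sqDev m (N : NNReal)⁻¹ (B i)) +
      2 * w 0 * (v i ^ 3 * (B i ⬝ᵥ Fin.tail w)) +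
      2 * w 0 * (v i * (sqDev m (N : NNReal)⁻¹ (B i) * (B i ⬝ᵥ Fin.tail w))) +
      v i ^ 2 * ((B i ⬝ᵥ Fin.tail w) ^ 2 - (N : ℝ)⁻¹ * xx) +
      sqDev m (N : NNReal)⁻¹ (B i) * (B i ⬝ᵥ Fin.tail w) ^ 2 + (N : ℝ)⁻¹ * xx * v i ^ 2 := by
    rw [gaussBasis_apply_dotProduct_self, gaussBasis_apply_dotProduct]
    simp only [sqDev]
    push_cast
    ring
  rw [dotProduct_specMat_mulVec, hw, Finset.sum_congr rfl fun i _ ↦ hterm i]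
  simp only [Finset.sum_add_distrib, ← Finset.mul_sum]
  ring

/-- The scales entering the error bound, with the constraints they satisfy. In the application
`p = √n`, `q = √(log (N / δ))`, `R = 1 / √N`, while `s₂ = ‖v‖`, `s₄ = ‖v‖₄²`, `s₆ = ‖v‖₆³`,
`κ = ‖v‖_∞` and `D = |‖v‖² - 1|`; in these variables the error is a polynomial. -/
structure ErrorScales where
  p : ℝ
  q : ℝ
  R : ℝ
  s₂ : ℝ
  s₄ : ℝ
  s₆ : ℝ
  κ : ℝ
  D : ℝ
  one_le_p : 1 ≤ p
  one_le_q : 1 ≤ q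
  R_pos : 0 < R
  q_pow_mul_R_le : q ^ 3 * R ≤ 1
  s₂_nonneg : 0 ≤ s₂
  s₄_nonneg : 0 ≤ s₄
  s₆_nonneg : 0 ≤ s₆
  κ_nonneg : 0 ≤ κ
  D_nonneg : 0 ≤ D

namespace ErrorScales

variable (H : ErrorScales)

/-- The error bound as a polynomial in the scales; it is `etaBound 1`, see `etaBound_one_eq`. -/
noncomputable def eta : ℝ :=
  H.p ^ 2 * H.q * H.R ^ 3 + H.s₂ * (H.p ^ 2 * H.q * H.R ^ 3) + H.s₄ * (H.p * H.q * H.R ^ 2) +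
    H.s₆ * ((H.p + H.q) * H.R) + H.κ ^ 2 * (H.p ^ 2 * H.q ^ 2 * H.R ^ 2) +
    H.κ ^ 2 * (H.q ^ 4 * H.R ^ 2) + H.p ^ 3 * H.q ^ 3 * H.R ^ 4 + H.D * H.R ^ 2

/-- The level at which the row deviations are truncated. -/
noncomputable def truncLevel : ℝ := 32 * (H.p * H.q + H.q ^ 2) * H.R ^ 2

theorem p_pos : 0 < H.p := one_pos.trans_le H.one_le_p

theorem q_pos : 0 < H.q := one_pos.trans_le H.one_le_q

theorem truncLevel_nonneg : 0 ≤ H.truncLevel := by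
  have hp := H.p_pos
  have hq := H.q_pos
  rw [truncLevel]
  positivity

theorem monomials_nonneg : 0 ≤ H.p ^ 2 * H.q * H.R ^ 3 ∧
    0 ≤ H.s₂ * (H.p ^ 2 * H.q * H.R ^ 3) ∧ 0 ≤ H.s₄ * (H.p * H.q * H.R ^ 2) ∧
    0 ≤ H.s₆ * ((H.p + H.q) * H.R) ∧ 0 ≤ H.κ ^ 2 * (H.p ^ 2 * H.q ^ 2 * H.R ^ 2) ∧
    0 ≤ H.κ ^ 2 * (H.q ^ 4 * H.R ^ 2) ∧ 0 ≤ H.p ^ 3 * H.q ^ 3 * H.R ^ 4 ∧ 0 ≤ H.D * H.R ^ 2 := by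
  have hp := H.p_pos
  have hq := H.q_pos
  have hR := H.R_pos
  have hs₂ := H.s₂_nonneg
  have hs₄ := H.s₄_nonneg
  have hs₆ := H.s₆_nonneg
  have hD := H.D_nonneg
  refine ⟨?_, ?_, ?_, ?_, ?_, ?_, ?_, ?_⟩ <;> positivity

theorem monomials_le_eta : H.p ^ 2 * H.q * H.R ^ 3 ≤ H.eta ∧
    H.s₂ * (H.p ^ 2 * H.q * H.R ^ 3) ≤ H.eta ∧ H.s₄ * (H.p * H.q * H.R ^ 2) ≤ H.eta ∧
    H.s₆ * ((H.p + H.q) * H.R) ≤ H.eta ∧ H.κ ^ 2 * (H.p ^ 2 * H.q ^ 2 * H.R ^ 2) ≤ H.eta ∧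
    H.κ ^ 2 * (H.q ^ 4 * H.R ^ 2) ≤ H.eta ∧ H.p ^ 3 * H.q ^ 3 * H.R ^ 4 ≤ H.eta ∧
    H.D * H.R ^ 2 ≤ H.eta := by
  obtain ⟨_, _, _, _, _, _, _, _⟩ := H.monomials_nonneg
  refine ⟨?_, ?_, ?_, ?_, ?_, ?_, ?_, ?_⟩ <;> rw [eta] <;> linarith

theorem eta_nonneg : 0 ≤ H.eta := H.monomials_nonneg.1.trans H.monomials_le_eta.1

theorem sq_add_sq_le : H.p ^ 2 + H.q ^ 2 ≤ 2 * (H.p ^ 2 * H.q ^ 2) := by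
  nlinarith [one_le_pow₀ H.one_le_p (n := 2), one_le_pow₀ H.one_le_q (n := 2)]

theorem pow_mul_pow_mul_R_pow_four_le_eta {i j : ℕ} (hi : i ≤ 3) (hj : j ≤ 3) :
    H.p ^ i * H.q ^ j * H.R ^ 4 ≤ H.eta := by
  obtain ⟨-, -, -, -, -, -, hle, -⟩ := H.monomials_le_eta
  have hp := H.p_pos
  have hq := H.q_pos
  refine le_trans ?_ hle
  gcongr
  exacts [H.one_le_p, H.one_le_q]

theorem q_pow_four_mul_R_pow_four_le_eta : H.q ^ 4 * H.R ^ 4 ≤ H.eta := by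
  have hR := H.R_pos
  have hq := H.q_pos
  calc H.q ^ 4 * H.R ^ 4 = (H.q ^ 3 * H.R) * (H.q * H.R ^ 3) := by ring
    _ ≤ 1 * (H.q * H.R ^ 3) := by gcongr; exact H.q_pow_mul_R_le
    _ ≤ H.p ^ 2 * (H.q * H.R ^ 3) := by gcongr; exact one_le_pow₀ H.one_le_p
    _ = H.p ^ 2 * H.q * H.R ^ 3 := by ring
    _ ≤ H.eta := H.monomials_le_eta.1

theorem R_pow_four_mul_sq_add_sq_le_eta : H.R ^ 4 * (H.p ^ 2 + H.q ^ 2) ≤ 2 * H.eta := by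
  have h := mul_le_mul_of_nonneg_left H.sq_add_sq_le (pow_pos H.R_pos 4).le
  linarith [H.pow_mul_pow_mul_R_pow_four_le_eta (i := 2) (j := 2) (by norm_num) (by norm_num)]

theorem sq_truncLevel_mul_sq_add_sq_le (hqp : H.q ≤ H.p) :
    H.truncLevel ^ 2 * (H.R ^ 2 * (H.p ^ 2 + H.q ^ 2)) ≤
      (128 * (H.p ^ 2 * H.q * H.R ^ 3)) ^ 2 := by
  have hp := H.p_pos
  have hq := H.q_pos
  have hsq : H.q ^ 2 ≤ H.p * H.q := by rw [sq]; gcongr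
  calc H.truncLevel ^ 2 * (H.R ^ 2 * (H.p ^ 2 + H.q ^ 2))
      ≤ (32 * (H.p * H.q + H.p * H.q) * H.R ^ 2) ^ 2 * (H.R ^ 2 * (H.p ^ 2 + H.p ^ 2)) := by
        rw [truncLevel]
        gcongr
    _ = 8192 * (H.p ^ 2 * H.q * H.R ^ 3) ^ 2 := by ring
    _ ≤ _ := by rw [mul_pow 128]; gcongr; norm_num

/-! ### Deviation thresholds

With `T` equal to `2 q ^ 2` or `2 (p ^ 2 + q ^ 2)`, each threshold `2 (√(τ T) + ρ T)` produced by
the subgamma tail bound is at most a multiple of `eta`. -/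

theorem diag_threshold_le :
    2 * (√(2 * H.p ^ 2 * H.R ^ 4 * H.s₄ ^ 2 * (2 * H.q ^ 2)) +
      (4 * H.κ ^ 2 * H.R ^ 2 + H.R ^ 4) * (2 * H.q ^ 2)) ≤ 20000 * H.eta := by
  obtain ⟨-, -, hs₄, -, hκ, -, -, -⟩ := H.monomials_le_eta
  have hsqrt : √(2 * H.p ^ 2 * H.R ^ 4 * H.s₄ ^ 2 * (2 * H.q ^ 2)) ≤ 2 * H.eta :=
    (Real.sqrt_le_iff.2 ⟨mul_nonneg zero_le_two H.monomials_nonneg.2.2.1, by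
      exact le_of_eq (by ring)⟩).trans (mul_le_mul_of_nonneg_left hs₄ zero_le_two)
  have hquad : H.κ ^ 2 * (H.q ^ 2 * H.R ^ 2) ≤ H.eta := by
    refine le_trans ?_ hκ
    gcongr
    exact le_mul_of_one_le_left (sq_nonneg _) (one_le_pow₀ H.one_le_p)
  linarith [H.eta_nonneg,
    H.pow_mul_pow_mul_R_pow_four_le_eta (i := 0) (j := 2) (by norm_num) (by norm_num)]

theorem cubic_threshold_le :
    2 * (√(H.R ^ 2 / 2 * H.s₆ ^ 2 * (2 * (H.p ^ 2 + H.q ^ 2))) +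
      H.R ^ 4 * (2 * (H.p ^ 2 + H.q ^ 2))) ≤ 20000 * H.eta := by
  obtain ⟨-, -, -, hs₆, -, -, -, -⟩ := H.monomials_le_eta
  have hp := H.p_pos
  have hq := H.q_pos
  have hsqrt : √(H.R ^ 2 / 2 * H.s₆ ^ 2 * (2 * (H.p ^ 2 + H.q ^ 2))) ≤
      H.s₆ * ((H.p + H.q) * H.R) := by
    refine Real.sqrt_le_iff.2 ⟨H.monomials_nonneg.2.2.2.1, ?_⟩
    calc _ = (H.s₆ * H.R) ^ 2 * (H.p ^ 2 + H.q ^ 2) := by ring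
      _ ≤ (H.s₆ * H.R) ^ 2 * (H.p + H.q) ^ 2 := by gcongr; nlinarith
      _ = _ := by ring
  linarith [H.eta_nonneg, H.R_pow_four_mul_sq_add_sq_le_eta]

theorem mixed_threshold_le_of_le (hqp : H.q ≤ H.p) :
    2 * (√(H.truncLevel ^ 2 * (H.R ^ 2 / 2) * H.s₂ ^ 2 * (2 * (H.p ^ 2 + H.q ^ 2))) +
      H.R ^ 4 * (2 * (H.p ^ 2 + H.q ^ 2))) ≤ 20000 * H.eta := by
  obtain ⟨-, hs₂, -, -, -, -, -, -⟩ := H.monomials_le_eta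
  have hsqrt : √(H.truncLevel ^ 2 * (H.R ^ 2 / 2) * H.s₂ ^ 2 * (2 * (H.p ^ 2 + H.q ^ 2))) ≤
      128 * (H.s₂ * (H.p ^ 2 * H.q * H.R ^ 3)) := by
    refine Real.sqrt_le_iff.2 ⟨mul_nonneg (by norm_num) H.monomials_nonneg.2.1, ?_⟩
    linarith [mul_le_mul_of_nonneg_left (H.sq_truncLevel_mul_sq_add_sq_le hqp) (sq_nonneg H.s₂)]
  linarith [H.eta_nonneg, H.R_pow_four_mul_sq_add_sq_le_eta]

theorem mixed_threshold_le_of_ge (hpq : H.p ≤ H.q) :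
    2 * (√(600000 * H.p ^ 2 * H.R ^ 6 * H.s₂ ^ 2 * (2 * (H.p ^ 2 + H.q ^ 2))) +
      (H.κ * (4 * (H.truncLevel * H.R)) + H.R ^ 4) * (2 * (H.p ^ 2 + H.q ^ 2))) ≤
      20000 * H.eta := by
  obtain ⟨-, hs₂, -, -, -, hκ, -, -⟩ := H.monomials_le_eta
  have hp := H.p_pos
  have hq := H.q_pos
  have hR := H.R_pos
  have hκ0 := H.κ_nonneg
  have hsqrt : √(600000 * H.p ^ 2 * H.R ^ 6 * H.s₂ ^ 2 * (2 * (H.p ^ 2 + H.q ^ 2))) ≤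
      1550 * (H.s₂ * (H.p ^ 2 * H.q * H.R ^ 3)) := by
    refine Real.sqrt_le_iff.2 ⟨mul_nonneg (by norm_num) H.monomials_nonneg.2.1, ?_⟩
    calc 600000 * H.p ^ 2 * H.R ^ 6 * H.s₂ ^ 2 * (2 * (H.p ^ 2 + H.q ^ 2))
        ≤ 600000 * H.p ^ 2 * H.R ^ 6 * H.s₂ ^ 2 * (2 * (2 * (H.p ^ 2 * H.q ^ 2))) := by
          gcongr
          exact H.sq_add_sq_le
      _ = 2400000 * (H.s₂ * (H.p ^ 2 * H.q * H.R ^ 3)) ^ 2 := by ring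
      _ ≤ _ := by rw [mul_pow 1550]; gcongr; norm_num
  have hlin : H.κ * (4 * (H.truncLevel * H.R)) * (2 * (H.p ^ 2 + H.q ^ 2)) ≤
      1024 * (H.κ * (H.q ^ 4 * H.R ^ 3)) := by
    calc _ ≤ H.κ * (4 * (32 * (H.q * H.q + H.q ^ 2) * H.R ^ 2 * H.R)) *
          (2 * (H.q ^ 2 + H.q ^ 2)) := by rw [truncLevel]; gcongr
      _ = _ := by ring
  have hamgm : 2 * (H.κ * (H.q ^ 4 * H.R ^ 3)) ≤
      H.κ ^ 2 * (H.q ^ 4 * H.R ^ 2) + H.q ^ 4 * H.R ^ 4 := by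
    linarith [sq_nonneg (H.κ * (H.q ^ 2 * H.R) - H.q ^ 2 * H.R ^ 2)]
  linarith [H.eta_nonneg, H.R_pow_four_mul_sq_add_sq_le_eta, H.q_pow_four_mul_R_pow_four_le_eta]

theorem quadratic_threshold_le :
    2 * (√(2 * H.R ^ 4 * H.s₄ ^ 2 * (2 * (H.p ^ 2 + H.q ^ 2))) +
      (4 * H.κ ^ 2 * H.R ^ 2 + H.R ^ 4) * (2 * (H.p ^ 2 + H.q ^ 2))) ≤ 20000 * H.eta := by
  obtain ⟨-, -, hs₄, -, hκ, -, -, -⟩ := H.monomials_le_eta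
  have hsqrt : √(2 * H.R ^ 4 * H.s₄ ^ 2 * (2 * (H.p ^ 2 + H.q ^ 2))) ≤
      3 * (H.s₄ * (H.p * H.q * H.R ^ 2)) := by
    refine Real.sqrt_le_iff.2 ⟨mul_nonneg (by norm_num) H.monomials_nonneg.2.2.1, ?_⟩
    calc 2 * H.R ^ 4 * H.s₄ ^ 2 * (2 * (H.p ^ 2 + H.q ^ 2))
        ≤ 2 * H.R ^ 4 * H.s₄ ^ 2 * (2 * (2 * (H.p ^ 2 * H.q ^ 2))) := by
          gcongr
          exact H.sq_add_sq_le
      _ = 8 * (H.s₄ * (H.p * H.q * H.R ^ 2)) ^ 2 := by ring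
      _ ≤ _ := by rw [mul_pow 3]; gcongr; norm_num
  have hquad := mul_le_mul_of_nonneg_left H.sq_add_sq_le
    (by positivity : 0 ≤ H.κ ^ 2 * H.R ^ 2)
  linarith [H.eta_nonneg, H.R_pow_four_mul_sq_add_sq_le_eta]

theorem quartic_threshold_le :
    2 * (√(300000 * H.p ^ 2 * H.R ^ 6 * (2 * (H.p ^ 2 + H.q ^ 2))) +
      (16 * (H.truncLevel * H.R ^ 2) + H.R ^ 4) * (2 * (H.p ^ 2 + H.q ^ 2))) ≤
      20000 * H.eta := by
  obtain ⟨hle, -, -, -, -, -, -, -⟩ := H.monomials_le_eta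
  have hsqrt : √(300000 * H.p ^ 2 * H.R ^ 6 * (2 * (H.p ^ 2 + H.q ^ 2))) ≤
      1100 * (H.p ^ 2 * H.q * H.R ^ 3) := by
    refine Real.sqrt_le_iff.2 ⟨mul_nonneg (by norm_num) H.monomials_nonneg.1, ?_⟩
    calc 300000 * H.p ^ 2 * H.R ^ 6 * (2 * (H.p ^ 2 + H.q ^ 2))
        ≤ 300000 * H.p ^ 2 * H.R ^ 6 * (2 * (2 * (H.p ^ 2 * H.q ^ 2))) := by
          gcongr
          exact H.sq_add_sq_le
      _ = 1200000 * (H.p ^ 2 * H.q * H.R ^ 3) ^ 2 := by ring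
      _ ≤ _ := by rw [mul_pow 1100]; gcongr; norm_num
  have hlin : 16 * (H.truncLevel * H.R ^ 2) * (2 * (H.p ^ 2 + H.q ^ 2)) =
      1024 * (H.p ^ 3 * H.q ^ 1 * H.R ^ 4 + H.p ^ 2 * H.q ^ 2 * H.R ^ 4 +
        H.p ^ 1 * H.q ^ 3 * H.R ^ 4 + H.q ^ 4 * H.R ^ 4) := by
    rw [truncLevel]
    ring
  rw [add_mul, hlin]
  linarith [H.eta_nonneg, H.R_pow_four_mul_sq_add_sq_le_eta, H.q_pow_four_mul_R_pow_four_le_eta,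
    H.pow_mul_pow_mul_R_pow_four_le_eta (i := 3) (j := 1) le_rfl (by norm_num),
    H.pow_mul_pow_mul_R_pow_four_le_eta (i := 2) (j := 2) (by norm_num) (by norm_num),
    H.pow_mul_pow_mul_R_pow_four_le_eta (i := 1) (j := 3) (by norm_num) le_rfl]

theorem bias_le : 300000 * H.p ^ 2 * H.R ^ 4 + 2 * H.R ^ 4 ≤ 310000 * H.eta := by
  linarith [H.eta_nonneg,
    H.pow_mul_pow_mul_R_pow_four_le_eta (i := 2) (j := 0) (by norm_num) (by norm_num),
    H.pow_mul_pow_mul_R_pow_four_le_eta (i := 0) (j := 0) (by norm_num) (by norm_num)]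

end ErrorScales

theorem abs_quadForm_error_le {a y d t b X₁ X₂ X₃ X₄ X₅ : ℝ} (ha : a ^ 2 ≤ 1) (hy0 : 0 ≤ y)
    (hy : y ≤ 1) (h₁ : |X₁| ≤ t) (h₂ : |X₂| ≤ t) (h₃ : |X₃| ≤ t) (h₄ : |X₄| ≤ t) (h₅ : |X₅| ≤ b)
    (hd : |d| ≤ t) :
    |a ^ 2 * X₁ + 2 * a * X₂ + 2 * a * X₃ + X₄ + X₅ + d * y| ≤ 7 * t + b := by
  have ha' : |a| ≤ 1 := (sq_le_one_iff_abs_le_one a).1 ha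
  have ht : 0 ≤ t := (abs_nonneg _).trans h₁
  have hdiag : |a ^ 2 * X₁| ≤ 1 * t := by
    rw [abs_mul, abs_of_nonneg (sq_nonneg a)]
    gcongr
  have hcross {X : ℝ} (hX : |X| ≤ t) : |2 * a * X| ≤ 2 * 1 * t := by
    rw [abs_mul, abs_mul, abs_two]
    gcongr
  have hshift : |d * y| ≤ t * 1 := by
    rw [abs_mul, abs_of_nonneg hy0]
    gcongr
  calc _ ≤ |a ^ 2 * X₁| + |2 * a * X₂| + |2 * a * X₃| + |X₄| + |X₅| + |d * y| := by
        iterate 5 refine (abs_add_le _ _).trans (add_le_add_left ?_ _)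
        exact le_rfl
    _ ≤ 7 * t + b := by linarith [hcross h₂, hcross h₃]

theorem HasSubgammaMGF.measureReal_weighted_sum_pi_gt_le {Ω ι : Type*} {mΩ : MeasurableSpace Ω}
    [Fintype ι] {μ : Measure Ω} [IsProbabilityMeasure μ] {Z : Ω → ℝ} {m τ ρ ρ' S T t : ℝ}
    {c : ι → ℝ} (h : HasSubgammaMGF Z m τ ρ μ) (hZ : Measurable Z) (hc : ∀ i, |c i| * ρ ≤ ρ')
    (hτ : 0 ≤ τ) (hρ' : 0 < ρ') (hT : 0 < T) (hS : ∑ i, c i ^ 2 = S)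
    (ht : 2 * (√(τ * S * T) + ρ' * T) ≤ t) :
    (Measure.pi fun _ : ι ↦ μ).real {ω | t < |∑ i, c i * (Z (ω i) - m)|} ≤
      2 * Real.exp (-T) := by
  refine (measureReal_mono fun ω hω ↦ ?_).trans
    ((h.weighted_sum_pi hZ hc).measureReal_abs_gt_le
      (mul_nonneg hτ (Finset.sum_nonneg fun i _ ↦ sq_nonneg (c i))) hρ' hT)
  exact (by rwa [hS] : _ ≤ t).trans_lt hω

instance (N k : ℕ) (σ2 : NNReal) : IsProbabilityMeasure (iidGaussVec N k σ2) := by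
  unfold iidGaussVec
  infer_instance

/-- The error scales of a vector `v ∈ ℝ^N` and a Gaussian block with `m = n - 1` columns. The
squared scales are recorded instead of norms, which keeps the tail bounds free of square roots. -/
structure GaussBasisScales (N m : ℕ) (v : Fin N → ℝ) extends ErrorScales where
  p_sq : p ^ 2 = m + 1
  R_sq : R ^ 2 = (N : ℝ)⁻¹
  s₂_sq : s₂ ^ 2 = ∑ i, v i ^ 2
  s₄_sq : s₄ ^ 2 = ∑ i, v i ^ 4
  s₆_sq : s₆ ^ 2 = ∑ i, v i ^ 6
  abs_le_κ : ∀ i, |v i| ≤ κ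
  abs_sub_one_le : |∑ i, v i ^ 2 - 1| ≤ D

namespace GaussBasisScales

variable {N m : ℕ} {v : Fin N → ℝ} (H : GaussBasisScales N m v) {x : Fin m → ℝ}

theorem coe_inv : (((N : NNReal)⁻¹ : NNReal) : ℝ) = H.R ^ 2 := by
  simp [H.R_sq]

theorem N_pos (H : GaussBasisScales N m v) : (0 : ℝ) < N := inv_pos.1 (H.R_sq ▸ pow_pos H.R_pos 2)

theorem inv_ne_zero (H : GaussBasisScales N m v) : (N : NNReal)⁻¹ ≠ 0 :=
  _root_.inv_ne_zero (by exact_mod_cast H.N_pos.ne')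

theorem R_sq_mul : H.R ^ 2 * N = 1 := by
  rw [H.R_sq, inv_mul_cancel₀ H.N_pos.ne']

theorem le_p_sq : (m : ℝ) ≤ H.p ^ 2 := by linarith [H.p_sq]

theorem one_le_p_sq : 1 ≤ H.p ^ 2 := one_le_pow₀ H.one_le_p

theorem exponent_pos : 0 < 2 * (H.p ^ 2 + H.q ^ 2) := by
  linarith [H.one_le_p_sq, sq_nonneg H.q]

theorem abs_pow_mul_le (k : ℕ) {ρ : ℝ} (hρ : 0 ≤ ρ) (i : Fin N) :
    |v i ^ k| * ρ ≤ H.κ ^ k * ρ := by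
  rw [abs_pow]
  gcongr
  exact H.abs_le_κ i

theorem measureReal_abs_sqDev_gt_le :
    (gaussVec m (N : NNReal)⁻¹).real {b | H.truncLevel < |sqDev m (N : NNReal)⁻¹ b|} ≤
      2 * Real.exp (-(4 * H.q ^ 2)) := by
  have hp := H.p_pos
  have hq := H.q_pos
  have hR := H.R_pos
  refine le_trans (measureReal_mono fun b hb ↦ ?_)
    ((hasSubgammaMGF_sqDev m (N : NNReal)⁻¹).measureReal_abs_gt_le (by positivity)
      (by rw [H.coe_inv]; positivity) (by positivity : 0 < 4 * H.q ^ 2))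
  refine lt_of_le_of_lt (b := H.truncLevel) ?_ hb
  have hsqrt : √(2 * m * (H.R ^ 2) ^ 2 * (4 * H.q ^ 2)) ≤ 3 * (H.p * H.q * H.R ^ 2) := by
    refine Real.sqrt_le_iff.2 ⟨by positivity, ?_⟩
    calc 2 * m * (H.R ^ 2) ^ 2 * (4 * H.q ^ 2)
        ≤ 2 * H.p ^ 2 * (H.R ^ 2) ^ 2 * (4 * H.q ^ 2) := by gcongr; exact H.le_p_sq
      _ = 8 * (H.p * H.q * H.R ^ 2) ^ 2 := by ring
      _ ≤ _ := by rw [mul_pow 3]; gcongr; norm_num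
  rw [H.coe_inv, ErrorScales.truncLevel]
  linarith [show 0 ≤ H.p * H.q * H.R ^ 2 by positivity]

theorem measureReal_diag_gt_le :
    (iidGaussVec N m (N : NNReal)⁻¹).real {B | 20000 * H.eta <
      |∑ i, v i ^ 2 * sqDev m (N : NNReal)⁻¹ (B i)|} ≤ 2 * Real.exp (-(2 * H.q ^ 2)) := by
  have hq := H.q_pos
  have hR := H.R_pos
  have hdev := (hasSubgammaMGF_sqDev m (N : NNReal)⁻¹).mono (τ' := 2 * H.p ^ 2 * H.R ^ 4)
    (by rw [H.coe_inv, ← pow_mul]; gcongr; exact H.le_p_sq) le_rfl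
  rw [H.coe_inv] at hdev
  simpa only [sub_zero, iidGaussVec] using
    hdev.measureReal_weighted_sum_pi_gt_le (measurable_sqDev _ _)
    (c := fun i ↦ v i ^ 2) (ρ' := 4 * H.κ ^ 2 * H.R ^ 2 + H.R ^ 4) (S := H.s₄ ^ 2)
    (fun i ↦ by linarith [H.abs_pow_mul_le 2 (ρ := 4 * H.R ^ 2) (by positivity) i, pow_pos hR 4])
    (by positivity) (by positivity) (by positivity) (by simp only [H.s₄_sq, ← pow_mul])
    H.diag_threshold_le

theorem measureReal_cubic_gt_le (hx : x ⬝ᵥ x ≤ 1) :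
    (iidGaussVec N m (N : NNReal)⁻¹).real {B | 20000 * H.eta < |∑ i, v i ^ 3 * (B i ⬝ᵥ x)|} ≤
      2 * Real.exp (-(2 * (H.p ^ 2 + H.q ^ 2))) := by
  have hR := H.R_pos
  have hdot := hasSubgammaMGF_dotProduct (N : NNReal)⁻¹ hx
  rw [H.coe_inv] at hdot
  simpa only [sub_zero, iidGaussVec] using hdot.measureReal_weighted_sum_pi_gt_le
    (measurable_dotProduct_const x) (c := fun i ↦ v i ^ 3) (ρ' := H.R ^ 4) (S := H.s₆ ^ 2)
    (fun i ↦ by rw [mul_zero]; positivity) (by positivity) (by positivity) H.exponent_pos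
    (by simp only [H.s₆_sq, ← pow_mul]) H.cubic_threshold_le

theorem measureReal_mixed_gt_le (hx : x ⬝ᵥ x ≤ 1) :
    (iidGaussVec N m (N : NNReal)⁻¹).real {B | 20000 * H.eta <
      |∑ i, v i * (truncDev m (N : NNReal)⁻¹ H.truncLevel (B i) * (B i ⬝ᵥ x))|} ≤
      2 * Real.exp (-(2 * (H.p ^ 2 + H.q ^ 2))) := by
  have hR := H.R_pos
  have hκ := H.κ_nonneg
  have hG := H.truncLevel_nonneg
  have hmeas := measurable_truncDev_mul_dotProduct m (N : NNReal)⁻¹ H.truncLevel x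
  -- truncation alone suffices for `q ≤ p`; for `p ≤ q` the variance needs the moment bound
  rcases le_total H.q H.p with hqp | hpq
  · have htrunc := hasSubgammaMGF_truncDev_mul_dotProduct (N : NNReal)⁻¹ hG hx
    rw [H.coe_inv] at htrunc
    simpa only [sub_zero, iidGaussVec] using htrunc.measureReal_weighted_sum_pi_gt_le hmeas
      (ρ' := H.R ^ 4) (fun i ↦ by rw [mul_zero]; positivity) (by positivity) (by positivity)
      H.exponent_pos H.s₂_sq.symm (H.mixed_threshold_le_of_le hqp)
  · have htrunc := hasSubgammaMGF_truncDev_mul_dotProduct_of_moment H.inv_ne_zero H.one_le_p_sq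
      H.le_p_sq hG hx
    rw [H.coe_inv, Real.sqrt_sq hR.le, ← pow_mul] at htrunc
    simpa only [sub_zero, iidGaussVec] using htrunc.measureReal_weighted_sum_pi_gt_le hmeas
      (ρ' := H.κ * (4 * (H.truncLevel * H.R)) + H.R ^ 4)
      (fun i ↦ le_add_of_le_of_nonneg
        (mul_le_mul_of_nonneg_right (H.abs_le_κ i) (by positivity)) (by positivity))
      (by positivity) (by positivity) H.exponent_pos H.s₂_sq.symm (H.mixed_threshold_le_of_ge hpq)

theorem hasSubgammaMGF_dotProduct_sq (hx : x ⬝ᵥ x ≤ 1) :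
    HasSubgammaMGF (fun b ↦ (b ⬝ᵥ x) ^ 2) ((N : ℝ)⁻¹ * (x ⬝ᵥ x)) (2 * H.R ^ 4) (4 * H.R ^ 2)
      (gaussVec m (N : NNReal)⁻¹) := by
  have h := _root_.hasSubgammaMGF_dotProduct_sq (N : NNReal)⁻¹ hx
  rw [H.coe_inv, ← pow_mul] at h
  rwa [← H.R_sq]

theorem measureReal_quadratic_gt_le (hx : x ⬝ᵥ x ≤ 1) :
    (iidGaussVec N m (N : NNReal)⁻¹).real {B | 20000 * H.eta <
      |∑ i, v i ^ 2 * ((B i ⬝ᵥ x) ^ 2 - (N : ℝ)⁻¹ * (x ⬝ᵥ x))|} ≤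
      2 * Real.exp (-(2 * (H.p ^ 2 + H.q ^ 2))) := by
  have hR := H.R_pos
  exact (H.hasSubgammaMGF_dotProduct_sq hx).measureReal_weighted_sum_pi_gt_le
    ((measurable_dotProduct_const x).pow_const 2)
    (c := fun i ↦ v i ^ 2) (ρ' := 4 * H.κ ^ 2 * H.R ^ 2 + H.R ^ 4) (S := H.s₄ ^ 2)
    (fun i ↦ by linarith [H.abs_pow_mul_le 2 (ρ := 4 * H.R ^ 2) (by positivity) i, pow_pos hR 4])
    (by positivity) (by positivity) H.exponent_pos (by simp only [H.s₄_sq, ← pow_mul])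
    H.quadratic_threshold_le

theorem measureReal_quartic_gt_le (hx : x ⬝ᵥ x ≤ 1) :
    (iidGaussVec N m (N : NNReal)⁻¹).real {B | 20000 * H.eta <
      |∑ i, (truncDev m (N : NNReal)⁻¹ H.truncLevel (B i) * (B i ⬝ᵥ x) ^ 2 -
        ∫ b, truncDev m (N : NNReal)⁻¹ H.truncLevel b * (b ⬝ᵥ x) ^ 2
          ∂gaussVec m (N : NNReal)⁻¹)|} ≤ 2 * Real.exp (-(2 * (H.p ^ 2 + H.q ^ 2))) := by
  have hR := H.R_pos
  have hG := H.truncLevel_nonneg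
  have htrunc := hasSubgammaMGF_truncDev_mul_dotProduct_sq H.inv_ne_zero H.one_le_p_sq
    H.le_p_sq hG hx
  rw [H.coe_inv, ← pow_mul] at htrunc
  have hvar : 300000 * H.p ^ 2 * H.R ^ (2 * 4) * N = 300000 * H.p ^ 2 * H.R ^ 6 := by
    linear_combination 300000 * H.p ^ 2 * H.R ^ 6 * H.R_sq_mul
  simpa only [one_mul, iidGaussVec] using htrunc.measureReal_weighted_sum_pi_gt_le
    (measurable_truncDev_mul_dotProduct_pow m _ _ x 2) (c := fun _ : Fin N ↦ 1)
    (ρ' := 16 * (H.truncLevel * H.R ^ 2) + H.R ^ 4) (S := N)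
    (fun _ ↦ by rw [abs_one, one_mul]; exact le_add_of_nonneg_right (by positivity))
    (by positivity) (by positivity) H.exponent_pos (by simp)
    (by rw [hvar]; exact H.quartic_threshold_le)

theorem R_sq_mul_exponent_le (hmN : m + 1 ≤ N) :
    H.R ^ 2 * (2 * (H.p ^ 2 + H.q ^ 2)) ≤ 4 := by
  have hq := H.q_pos
  have hR := H.R_pos
  have hpN : H.p ^ 2 * H.R ^ 2 ≤ 1 := by
    rw [← H.R_sq_mul, mul_comm (H.R ^ 2), H.p_sq]
    gcongr
    exact_mod_cast hmN
  have hqN : H.q ^ 2 * H.R ^ 2 ≤ 1 :=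
    calc H.q ^ 2 * H.R ^ 2 ≤ (H.q ^ 3) ^ 2 * H.R ^ 2 := by
          rw [← pow_mul]
          gcongr ?_ * H.R ^ 2
          exact pow_le_pow_right₀ H.one_le_q (by norm_num)
      _ = (H.q ^ 3 * H.R) ^ 2 := by rw [mul_pow]
      _ ≤ 1 := pow_le_one₀ (by positivity) H.q_pow_mul_R_le
  linarith

theorem measureReal_sum_dotProduct_sq_gt_le (hmN : m + 1 ≤ N) (hx : x ⬝ᵥ x ≤ 1) :
    (iidGaussVec N m (N : NNReal)⁻¹).real {B | 39 < ∑ i, (B i ⬝ᵥ x) ^ 2} ≤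
      2 * Real.exp (-(2 * (H.p ^ 2 + H.q ^ 2))) := by
  have hR := H.R_pos
  have hexponent := H.R_sq_mul_exponent_le hmN
  have hsqrt : √(2 * H.R ^ 4 * N * (2 * (H.p ^ 2 + H.q ^ 2))) ≤ 3 := by
    refine Real.sqrt_le_iff.2 ⟨by norm_num, ?_⟩
    calc 2 * H.R ^ 4 * N * (2 * (H.p ^ 2 + H.q ^ 2))
        = 2 * (H.R ^ 2 * N) * (H.R ^ 2 * (2 * (H.p ^ 2 + H.q ^ 2))) := by ring
      _ ≤ _ := by rw [H.R_sq_mul]; linarith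
  refine (measureReal_mono fun B hB ↦ ?_).trans
    ((H.hasSubgammaMGF_dotProduct_sq hx).measureReal_weighted_sum_pi_gt_le
      ((measurable_dotProduct_const x).pow_const 2) (c := fun _ : Fin N ↦ 1)
      (ρ' := 4 * H.R ^ 2) (S := N) (t := 38) (fun _ ↦ by rw [abs_one, one_mul])
      (by positivity) (by positivity) H.exponent_pos (by simp) (by linarith))
  have hsum : ∑ i, (1 : ℝ) * ((B i ⬝ᵥ x) ^ 2 - (N : ℝ)⁻¹ * (x ⬝ᵥ x)) =
      ∑ i, (B i ⬝ᵥ x) ^ 2 - x ⬝ᵥ x := by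
    simp [Finset.sum_sub_distrib, mul_inv_cancel_left₀ H.N_pos.ne']
  simp only [Set.mem_ofPred_eq] at hB ⊢
  rw [hsum]
  exact lt_of_lt_of_le (by linarith) (le_abs_self _)

theorem measureReal_exists_abs_sqDev_gt_le :
    (iidGaussVec N m (N : NNReal)⁻¹).real
      {B | ∃ i, H.truncLevel < |sqDev m (N : NNReal)⁻¹ (B i)|} ≤
      N * (2 * Real.exp (-(4 * H.q ^ 2))) := by
  have hmeas : MeasurableSet {b | H.truncLevel < |sqDev m (N : NNReal)⁻¹ b|} :=
    measurableSet_lt measurable_const (measurable_sqDev m _).abs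
  rw [Set.ofPred_exists]
  refine (measureReal_iUnion_fintype_le _).trans ?_
  refine (Finset.sum_le_card_nsmul _ _ _ fun i _ ↦ ?_).trans_eq (by
    rw [Finset.card_univ, Fintype.card_fin, nsmul_eq_mul])
  exact ((measurePreserving_eval (fun _ ↦ gaussVec m (N : NNReal)⁻¹) i).measureReal_preimage
    hmeas.nullMeasurableSet).trans_le H.measureReal_abs_sqDev_gt_le

theorem abs_bias_le (hexp : Real.exp (-H.q ^ 2) ≤ H.R ^ 2) (hx : x ⬝ᵥ x ≤ 1) :
    |N * ∫ b, truncDev m (N : NNReal)⁻¹ H.truncLevel b * (b ⬝ᵥ x) ^ 2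
        ∂gaussVec m (N : NNReal)⁻¹ - 2 * (N : ℝ)⁻¹ * (x ⬝ᵥ x)| ≤ 310000 * H.eta := by
  have hN := H.N_pos
  have hbias := abs_integral_truncDev_sub_le H.inv_ne_zero H.one_le_p_sq H.le_p_sq H.truncLevel hx
  have htail := H.measureReal_abs_sqDev_gt_le
  set I := ∫ b, truncDev m (N : NNReal)⁻¹ H.truncLevel b * (b ⬝ᵥ x) ^ 2
        ∂gaussVec m (N : NNReal)⁻¹
  rw [H.coe_inv] at hbias
  have hexp' : Real.exp (-(4 * H.q ^ 2)) ≤ H.R ^ 4 :=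
    calc Real.exp (-(4 * H.q ^ 2)) ≤ Real.exp (-H.q ^ 2) ^ 2 := by
          rw [← Real.exp_nat_mul]
          gcongr
          push_cast
          linarith [sq_nonneg H.q]
      _ ≤ (H.R ^ 2) ^ 2 := by gcongr
      _ = H.R ^ 4 := by ring
  have hfactor : N * I - 2 * (N : ℝ)⁻¹ * (x ⬝ᵥ x) =
      N * (I - 2 * (H.R ^ 2) ^ 2 * (x ⬝ᵥ x)) := by
    rw [← H.R_sq]
    linear_combination 2 * H.R ^ 2 * (x ⬝ᵥ x) * H.R_sq_mul
  rw [hfactor, abs_mul, abs_of_pos hN]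
  calc N * |I - 2 * (H.R ^ 2) ^ 2 * (x ⬝ᵥ x)|
      ≤ N * (300000 * H.p ^ 2 * (H.R ^ 2) ^ 3 + H.R ^ 2 * (2 * H.R ^ 4)) := by
        gcongr
        exact hbias.trans (by gcongr; linarith)
    _ = 300000 * H.p ^ 2 * H.R ^ 4 + 2 * H.R ^ 4 := by
        linear_combination (300000 * H.p ^ 2 * H.R ^ 4 + 2 * H.R ^ 4) * H.R_sq_mul
    _ ≤ 310000 * H.eta := H.bias_le

end GaussBasisScales

namespace GaussBasisScales

open Metric
open scoped Matrix.Norms.L2Operator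

variable {N m : ℕ} {v : Fin N → ℝ} (H : GaussBasisScales N m v) {w : Fin (m + 1) → ℝ}
  {B : Fin N → Fin m → ℝ}

/-- The Gaussian blocks all of whose rows have deviation below the truncation level and whose
diagonal error is small: the part of the good event that is common to all test directions. -/
def typical : Set (Fin N → Fin m → ℝ) :=
  {B | (∀ i, |sqDev m (N : NNReal)⁻¹ (B i)| ≤ H.truncLevel) ∧
    |∑ i, v i ^ 2 * sqDev m (N : NNReal)⁻¹ (B i)| ≤ 20000 * H.eta}

/-- The Gaussian blocks for which, in the direction `w`, the quadratic form of `specMat` is close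
to its rank-one target and the Gaussian basis does not stretch too much. -/
def goodAt (w : Fin (m + 1) → ℝ) : Set (Fin N → Fin m → ℝ) :=
  {B | |w ⬝ᵥ specMat (gaussBasis (n := m + 1) v B) *ᵥ w - (∑ i, v i ^ 4 - 3 / N) * w 0 ^ 2| ≤
      500000 * H.eta ∧
    ∑ i, (gaussBasis (n := m + 1) v B i ⬝ᵥ w) ^ 2 ≤ (9 * (H.s₂ + 1)) ^ 2}

theorem measureReal_compl_typical_le :
    (iidGaussVec N m (N : NNReal)⁻¹).real H.typicalᶜ ≤
      N * (2 * Real.exp (-(4 * H.q ^ 2))) + 2 * Real.exp (-(2 * H.q ^ 2)) := by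
  refine (measureReal_mono fun B hB ↦ ?_).trans ((measureReal_union_le _ _).trans
    (add_le_add H.measureReal_exists_abs_sqDev_gt_le H.measureReal_diag_gt_le))
  simpa only [typical, Set.mem_compl_iff, Set.mem_union, Set.mem_ofPred_eq, not_and_or,
    not_forall, not_le] using hB

theorem abs_quadForm_sub_le (hexp : Real.exp (-H.q ^ 2) ≤ H.R ^ 2) (hw : w ⬝ᵥ w = 1)
    (hB : B ∈ H.typical)
    (hcubic : |∑ i, v i ^ 3 * (B i ⬝ᵥ Fin.tail w)| ≤ 20000 * H.eta)
    (hmixed : |∑ i, v i * (truncDev m (N : NNReal)⁻¹ H.truncLevel (B i) * (B i ⬝ᵥ Fin.tail w))| ≤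
      20000 * H.eta)
    (hquadratic : |∑ i, v i ^ 2 * ((B i ⬝ᵥ Fin.tail w) ^ 2 -
      (N : ℝ)⁻¹ * (Fin.tail w ⬝ᵥ Fin.tail w))| ≤ 20000 * H.eta)
    (hquartic : |∑ i, (truncDev m (N : NNReal)⁻¹ H.truncLevel (B i) * (B i ⬝ᵥ Fin.tail w) ^ 2 -
      ∫ b, truncDev m (N : NNReal)⁻¹ H.truncLevel b * (b ⬝ᵥ Fin.tail w) ^ 2
        ∂gaussVec m (N : NNReal)⁻¹)| ≤ 20000 * H.eta) :
    |w ⬝ᵥ specMat (gaussBasis (n := m + 1) v B) *ᵥ w - (∑ i, v i ^ 4 - 3 / N) * w 0 ^ 2| ≤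
      500000 * H.eta := by
  have hx0 : 0 ≤ Fin.tail w ⬝ᵥ Fin.tail w := dotProduct_star_self_nonneg (Fin.tail w)
  have hx := tail_dotProduct_tail_le_one hw
  have hw0 : w 0 ^ 2 ≤ 1 := by linarith [dotProduct_self_eq_sq_add_tail w]
  have htrunc (i : Fin N) : truncDev m (N : NNReal)⁻¹ H.truncLevel (B i) =
      sqDev m (N : NNReal)⁻¹ (B i) := if_pos (hB.1 i)
  simp only [htrunc] at hmixed hquartic
  have hshift : |(∑ i, v i ^ 2 - 1) * (N : ℝ)⁻¹| ≤ 20000 * H.eta := by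
    obtain ⟨-, -, -, -, -, -, -, hD⟩ := H.monomials_le_eta
    rw [← H.R_sq, abs_mul, abs_of_nonneg (sq_nonneg H.R)]
    linarith [H.eta_nonneg, mul_le_mul_of_nonneg_right H.abs_sub_one_le (sq_nonneg H.R)]
  have hfluct : |∑ i, sqDev m (N : NNReal)⁻¹ (B i) * (B i ⬝ᵥ Fin.tail w) ^ 2 -
      2 * (N : ℝ)⁻¹ * (Fin.tail w ⬝ᵥ Fin.tail w)| ≤ 330000 * H.eta := by
    rw [Finset.sum_sub_distrib, Finset.sum_const, Finset.card_univ, Fintype.card_fin,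
      nsmul_eq_mul] at hquartic
    exact (abs_sub_le _ _ _).trans
      ((add_le_add hquartic (H.abs_bias_le hexp hx)).trans_eq (by ring))
  rw [dotProduct_specMat_gaussBasis_mulVec_sub (by exact_mod_cast H.N_pos.ne')]
  exact (abs_quadForm_error_le hw0 hx0 hx hB.2 hcubic hmixed hquadratic hfluct hshift).trans
    (by linarith [H.eta_nonneg])

theorem measureReal_typical_inter_quadForm_gt_le (hexp : Real.exp (-H.q ^ 2) ≤ H.R ^ 2)
    (hw : w ⬝ᵥ w = 1) :
    (iidGaussVec N m (N : NNReal)⁻¹).real (H.typical ∩ {B | 500000 * H.eta <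
      |w ⬝ᵥ specMat (gaussBasis (n := m + 1) v B) *ᵥ w - (∑ i, v i ^ 4 - 3 / N) * w 0 ^ 2|}) ≤
      8 * Real.exp (-(2 * (H.p ^ 2 + H.q ^ 2))) := by
  have hx := tail_dotProduct_tail_le_one hw
  refine (measureReal_mono ?_).trans
    ((measureReal_union_le _ _).trans (add_le_add (H.measureReal_cubic_gt_le hx)
    ((measureReal_union_le _ _).trans (add_le_add (H.measureReal_mixed_gt_le hx)
    ((measureReal_union_le _ _).trans (add_le_add (H.measureReal_quadratic_gt_le hx)
    (H.measureReal_quartic_gt_le hx)))))) |>.trans_eq (by ring))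
  rintro B ⟨hB, hgt⟩
  by_contra hsmall
  simp only [Set.mem_union, not_or, Set.mem_ofPred_eq, not_lt] at hsmall
  obtain ⟨hcubic, hmixed, hquadratic, hquartic⟩ := hsmall
  exact not_lt.2 (H.abs_quadForm_sub_le hexp hw hB hcubic hmixed hquadratic hquartic) hgt

theorem sum_gaussBasis_dotProduct_sq_le (hw : w ⬝ᵥ w = 1)
    (hB : ∑ i, (B i ⬝ᵥ Fin.tail w) ^ 2 ≤ 39) :
    ∑ i, (gaussBasis (n := m + 1) v B i ⬝ᵥ w) ^ 2 ≤ (9 * (H.s₂ + 1)) ^ 2 := by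
  have hx0 : 0 ≤ Fin.tail w ⬝ᵥ Fin.tail w := dotProduct_star_self_nonneg (Fin.tail w)
  have hw0 : w 0 ^ 2 ≤ 1 := by linarith [dotProduct_self_eq_sq_add_tail w]
  simp only [gaussBasis_apply_dotProduct]
  calc ∑ i, (v i * w 0 + B i ⬝ᵥ Fin.tail w) ^ 2
      ≤ ∑ i, (2 * v i ^ 2 + 2 * (B i ⬝ᵥ Fin.tail w) ^ 2) := by
        refine Finset.sum_le_sum fun i _ ↦ ?_
        have hhead : (v i * w 0) ^ 2 ≤ v i ^ 2 := by
          rw [mul_pow]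
          exact mul_le_of_le_one_right (sq_nonneg _) hw0
        linarith [add_sq_le (a := v i * w 0) (b := B i ⬝ᵥ Fin.tail w)]
    _ = 2 * H.s₂ ^ 2 + 2 * ∑ i, (B i ⬝ᵥ Fin.tail w) ^ 2 := by
        rw [Finset.sum_add_distrib, ← Finset.mul_sum, ← Finset.mul_sum, H.s₂_sq]
    _ ≤ (9 * (H.s₂ + 1)) ^ 2 := by nlinarith [H.s₂_nonneg]

theorem measureReal_typical_diff_goodAt_le (hmN : m + 1 ≤ N)
    (hexp : Real.exp (-H.q ^ 2) ≤ H.R ^ 2) (hw : w ⬝ᵥ w = 1) :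
    (iidGaussVec N m (N : NNReal)⁻¹).real (H.typical \ H.goodAt w) ≤
      10 * Real.exp (-(2 * (H.p ^ 2 + H.q ^ 2))) := by
  refine (measureReal_mono ?_).trans ((measureReal_union_le _ _).trans
    (add_le_add (H.measureReal_typical_inter_quadForm_gt_le hexp hw)
      (H.measureReal_sum_dotProduct_sq_gt_le hmN (tail_dotProduct_tail_le_one hw))) |>.trans_eq
    (by ring))
  rintro B ⟨htypical, hbad⟩
  by_contra hB
  simp only [Set.mem_union, Set.mem_inter_iff, not_or, not_and, Set.mem_ofPred_eq, not_lt] at hB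
  exact hbad ⟨hB.1 htypical, H.sum_gaussBasis_dotProduct_sq_le hw hB.2⟩

theorem five_pow_mul_exp_le :
    5 ^ (m + 1) * Real.exp (-(2 * (H.p ^ 2 + H.q ^ 2))) ≤ Real.exp (-(2 * H.q ^ 2)) := by
  have hfive : (5 : ℝ) ≤ Real.exp 2 := by
    rw [← one_add_one_eq_two, Real.exp_add]
    nlinarith [Real.exp_one_gt_d9]
  calc 5 ^ (m + 1) * Real.exp (-(2 * (H.p ^ 2 + H.q ^ 2)))
      ≤ Real.exp 2 ^ (m + 1) * Real.exp (-(2 * (H.p ^ 2 + H.q ^ 2))) := by gcongr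
    _ = Real.exp (-(2 * H.q ^ 2)) := by
        rw [← Real.exp_nat_mul, ← Real.exp_add, H.p_sq]
        push_cast
        ring_nf

theorem measureReal_compl_iInter_goodAt_le (hmN : m + 1 ≤ N)
    (hexp : Real.exp (-H.q ^ 2) ≤ H.R ^ 2) {s : Finset (EuclideanSpace ℝ (Fin (m + 1)))}
    (hcard : s.card ≤ 5 ^ (m + 1)) (hs : ∀ c ∈ s, c.ofLp ⬝ᵥ c.ofLp = 1) :
    (iidGaussVec N m (N : NNReal)⁻¹).real (⋂ c ∈ s, H.goodAt c.ofLp)ᶜ ≤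
      N * (2 * Real.exp (-(4 * H.q ^ 2))) + 12 * Real.exp (-(2 * H.q ^ 2)) := by
  have hsubset : (⋂ c ∈ s, H.goodAt c.ofLp)ᶜ ⊆
      H.typicalᶜ ∪ ⋃ c ∈ s, H.typical \ H.goodAt c.ofLp := by
    intro B hB
    simp only [Set.mem_compl_iff, Set.mem_iInter, not_forall] at hB
    obtain ⟨c, hc, hbad⟩ := hB
    by_cases htypical : B ∈ H.typical
    · exact .inr (Set.mem_biUnion hc ⟨htypical, hbad⟩)
    · exact .inl htypical
  have hunion : (iidGaussVec N m (N : NNReal)⁻¹).real (⋃ c ∈ s, H.typical \ H.goodAt c.ofLp) ≤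
      10 * Real.exp (-(2 * H.q ^ 2)) :=
    calc _ ≤ ∑ c ∈ s, _ := measureReal_biUnion_finset_le _ _
      _ ≤ s.card • (10 * Real.exp (-(2 * (H.p ^ 2 + H.q ^ 2)))) :=
        Finset.sum_le_card_nsmul _ _ _ fun c hc ↦
          H.measureReal_typical_diff_goodAt_le hmN hexp (hs c hc)
      _ ≤ 5 ^ (m + 1) * (10 * Real.exp (-(2 * (H.p ^ 2 + H.q ^ 2)))) := by
        rw [nsmul_eq_mul]
        gcongr
        exact_mod_cast hcard
      _ ≤ 10 * Real.exp (-(2 * H.q ^ 2)) := by linarith [H.five_pow_mul_exp_le]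
  linarith [measureReal_mono (μ := iidGaussVec N m (N : NNReal)⁻¹) hsubset,
    measureReal_union_le (μ := iidGaussVec N m (N : NNReal)⁻¹) H.typicalᶜ
      (⋃ c ∈ s, H.typical \ H.goodAt c.ofLp), H.measureReal_compl_typical_le]

theorem failure_probability_le {δ : ℝ} (hδ0 : 0 < δ) (hδ1 : δ < 1) (hN : 14 ≤ N)
    (hexp : Real.exp (-H.q ^ 2) = δ * H.R ^ 2) :
    N * (2 * Real.exp (-(4 * H.q ^ 2))) + 12 * Real.exp (-(2 * H.q ^ 2)) ≤ δ := by
  have hpow (k : ℕ) : Real.exp (-(k * H.q ^ 2)) = (δ * H.R ^ 2) ^ k := by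
    rw [← hexp, ← Real.exp_nat_mul, mul_neg]
  have hfour := hpow 4
  have htwo := hpow 2
  push_cast at hfour htwo
  rw [hfour, htwo]
  have hmul : δ * H.R ^ 2 * N = δ := by rw [mul_assoc, H.R_sq_mul, mul_one]
  have hpos : 0 < δ * H.R ^ 2 := mul_pos hδ0 (pow_pos H.R_pos 2)
  have hsmall : 14 * (δ * H.R ^ 2) ≤ δ := by
    have : (14 : ℝ) ≤ N := by exact_mod_cast hN
    nlinarith
  set z := δ * H.R ^ 2
  have hz : z ≤ 1 := by linarith
  calc N * (2 * z ^ 4) + 12 * z ^ 2 = 2 * z ^ 3 * δ + 12 * z ^ 2 := by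
        linear_combination 2 * z ^ 3 * hmul
    _ ≤ 2 * z ^ 1 * 1 + 12 * z ^ 1 := by
        gcongr 2 * ?_ * ?_ + 12 * ?_
        · exact pow_le_pow_of_le_one hpos.le hz (by norm_num)
        · exact pow_le_pow_of_le_one hpos.le hz (by norm_num)
    _ ≤ δ := by linarith

theorem measureReal_compl_norm_specMat_sub_le {δ : ℝ} (hδ0 : 0 < δ) (hδ1 : δ < 1)
    (hmN : m + 1 ≤ N) (hN : 14 ≤ N) (hexp : Real.exp (-H.q ^ 2) = δ * H.R ^ 2) :
    (iidGaussVec N m (N : NNReal)⁻¹).real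
      {B | ‖specMat (gaussBasis (n := m + 1) v B) -
          (∑ i, v i ^ 4 - 3 / N) • vecMulVec (Pi.single 0 1) (Pi.single 0 1)‖ ≤ 1000000 * H.eta ∧
        ‖gaussBasis (n := m + 1) v B‖ ≤ 18 * (H.s₂ + 1)}ᶜ ≤ δ := by
  obtain ⟨s, hsphere, hcard, hcover⟩ := exists_finset_isCover_half
    (sphere_subset_closedBall (x := (0 : EuclideanSpace ℝ (Fin (m + 1)))) (ε := 1))
  rw [finrank_euclideanSpace_fin] at hcard
  have hs (c : EuclideanSpace ℝ (Fin (m + 1))) (hc : c ∈ s) : c.ofLp ⬝ᵥ c.ofLp = 1 := by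
    rw [dotProduct_self_eq_norm_sq, mem_sphere_zero_iff_norm.1 (hsphere hc), one_pow]
  have hexp' : Real.exp (-H.q ^ 2) ≤ H.R ^ 2 :=
    hexp.trans_le (mul_le_of_le_one_left (sq_nonneg _) hδ1.le)
  refine (measureReal_mono (Set.compl_subset_compl.2 fun B hB ↦ ?_)).trans
    ((H.measureReal_compl_iInter_goodAt_le hmN hexp' hcard hs).trans
      (H.failure_probability_le hδ0 hδ1 hN hexp))
  simp only [Set.mem_iInter] at hB
  have hsymm : (specMat (gaussBasis (n := m + 1) v B) - (∑ i, v i ^ 4 - 3 / N) •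
      vecMulVec (Pi.single 0 1) (Pi.single 0 1)).IsSymm :=
    (specMat_isSymm _).sub (IsSymm.smul (transpose_vecMulVec _ _) _)
  constructor
  · refine (l2_opNorm_le_two_mul_of_isCover_half_of_isSymm hsymm hsphere hcover
      (ε := 500000 * H.eta) (by linarith [H.eta_nonneg]) fun c hc ↦ ?_).trans_eq (by ring)
    simpa [sub_mulVec, smul_mulVec, vecMulVec_mulVec, sq, mul_assoc] using (hB c hc).1
  · exact (l2_opNorm_le_two_mul_of_isCover_half _ hcover (by linarith [H.s₂_nonneg])
      fun c hc ↦ (hB c hc).2).trans_eq (by ring)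

end GaussBasisScales

section EtaBound

variable {N m k : ℕ}

theorem lpNorm_nonneg (k : ℝ) (v : Fin N → ℝ) : 0 ≤ lpNorm k v :=
  Real.rpow_nonneg (Finset.sum_nonneg fun _ _ ↦ Real.rpow_nonneg (abs_nonneg _) _) _

theorem lpNorm_pow_eq_sum_abs_pow (hk : k ≠ 0) (v : Fin N → ℝ) :
    lpNorm (k : ℝ) v ^ k = ∑ i, |v i| ^ k := by
  have hsum : 0 ≤ ∑ i, |v i| ^ (k : ℝ) := Finset.sum_nonneg fun i _ ↦ by positivity
  rw [_root_.lpNorm, one_div, Real.rpow_inv_natCast_pow hsum hk]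
  simp only [Real.rpow_natCast]

theorem lpNorm_four_pow (v : Fin N → ℝ) : lpNorm 4 v ^ 4 = ∑ i, v i ^ 4 := by
  have h := lpNorm_pow_eq_sum_abs_pow four_ne_zero v
  simp only [(by decide : Even 4).pow_abs] at h
  exact_mod_cast h

theorem lpNorm_six_pow (v : Fin N → ℝ) : lpNorm 6 v ^ 6 = ∑ i, v i ^ 6 := by
  have h := lpNorm_pow_eq_sum_abs_pow (by norm_num : 6 ≠ 0) v
  simp only [(by decide : Even 6).pow_abs] at h
  exact_mod_cast h

theorem abs_le_supNorm (v : Fin N → ℝ) (i : Fin N) : |v i| ≤ supNorm v :=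
  le_ciSup (f := fun i ↦ |v i|) (Set.finite_range _).bddAbove i

theorem rpow_three_halves {x : ℝ} (hx : 0 ≤ x) : x ^ ((3 : ℝ) / 2) = √x ^ 3 := by
  rw [Real.sqrt_eq_rpow, ← Real.rpow_natCast, ← Real.rpow_mul hx]
  norm_num

/-- The scales of the model with `n = m + 1` columns at confidence level `L = log (N / δ)`. -/
noncomputable def GaussBasisScales.ofLog (m : ℕ) (v : Fin N → ℝ) {L : ℝ} (hN : 0 < N) (hL : 1 ≤ L)
    (hLN : L ^ 3 ≤ N) : GaussBasisScales N m v where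
  p := √(m + 1 : ℕ)
  q := √L
  R := (√N)⁻¹
  s₂ := eucNorm v
  s₄ := lpNorm 4 v ^ 2
  s₆ := lpNorm 6 v ^ 3
  κ := supNorm v
  D := |eucNorm v ^ 2 - 1|
  one_le_p := Real.one_le_sqrt.2 (by exact_mod_cast Nat.le_add_left 1 m)
  one_le_q := Real.one_le_sqrt.2 hL
  R_pos := by positivity
  q_pow_mul_R_le := by
    rw [← div_eq_mul_inv, div_le_one (by positivity)]
    refine Real.le_sqrt_of_sq_le ?_
    rwa [← pow_mul, mul_comm, pow_mul, Real.sq_sqrt (zero_le_one.trans hL)]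
  s₂_nonneg := eucNorm_nonneg v
  s₄_nonneg := sq_nonneg _
  s₆_nonneg := pow_nonneg (lpNorm_nonneg 6 v) 3
  κ_nonneg := Real.iSup_nonneg fun i ↦ abs_nonneg _
  D_nonneg := abs_nonneg _
  p_sq := by rw [Real.sq_sqrt (Nat.cast_nonneg _), Nat.cast_succ]
  R_sq := by rw [inv_pow, Real.sq_sqrt (Nat.cast_nonneg N)]
  s₂_sq := eucNorm_sq_eq_sum v
  s₄_sq := by rw [← pow_mul, lpNorm_four_pow]
  s₆_sq := by rw [← pow_mul, lpNorm_six_pow]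
  abs_le_κ := abs_le_supNorm v
  abs_sub_one_le := by rw [eucNorm_sq_eq_sum]

theorem etaBound_one_eq (v : Fin N → ℝ) {δ : ℝ} (hN : 0 < N) (hL : 1 ≤ Real.log (N / δ))
    (hLN : Real.log (N / δ) ^ 3 ≤ N) :
    etaBound 1 N (m + 1) v δ = (GaussBasisScales.ofLog m v hN hL hLN).eta := by
  have hlog : 0 ≤ Real.log (N / δ) := zero_le_one.trans hL
  have hm : (0 : ℝ) ≤ (m + 1 : ℕ) := Nat.cast_nonneg _
  have hsqrt : 0 < √(N : ℝ) := by positivity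
  have hN_sq := Real.sq_sqrt (Nat.cast_nonneg N : (0 : ℝ) ≤ N)
  have hm_sq := Real.sq_sqrt hm
  have hlog_sq := Real.sq_sqrt hlog
  rw [etaBound, rpow_three_halves (Nat.cast_nonneg N), rpow_three_halves (mul_nonneg hm hlog),
    Real.sqrt_mul hm, ErrorScales.eta]
  dsimp only [GaussBasisScales.ofLog]
  generalize √(N : ℝ) = a, √((m + 1 : ℕ) : ℝ) = b, √(Real.log (N / δ)) = c at *
  rw [← hlog_sq, ← hN_sq, ← hm_sq]
  field_simp
  ring

theorem one_le_log_div {δ : ℝ} (hN : 14 ≤ N) (hδ0 : 0 < δ) (hδ1 : δ < 1) :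
    1 ≤ Real.log (N / δ) := by
  have hN' : (14 : ℝ) ≤ N := by exact_mod_cast hN
  rw [Real.le_log_iff_exp_le (by positivity)]
  linarith [Real.exp_one_lt_d9, le_div_self (by positivity : (0 : ℝ) ≤ N) hδ0 hδ1.le]

end EtaBound

theorem exp_neg_sq_sqrt_log_div {x δ : ℝ} (hx : 0 < x) (hδ : 0 < δ)
    (hlog : 0 ≤ Real.log (x / δ)) : Real.exp (-√(Real.log (x / δ)) ^ 2) = δ * (√x)⁻¹ ^ 2 := by
  rw [Real.sq_sqrt hlog, Real.exp_neg, Real.exp_log (by positivity), inv_pow,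
    Real.sq_sqrt hx.le, inv_div, div_eq_mul_inv]

theorem ofReal_one_sub_le_measure {Ω : Type*} {mΩ : MeasurableSpace Ω} {μ : Measure Ω}
    [IsProbabilityMeasure μ] {S T : Set Ω} {δ : ℝ} (hST : S ⊆ T) (hS : μ.real Sᶜ ≤ δ) :
    ENNReal.ofReal (1 - δ) ≤ μ T := by
  have hcover := measureReal_union_le (μ := μ) S Sᶜ
  rw [Set.union_compl_self, probReal_univ] at hcover
  refine le_trans ?_ (measure_mono hST)
  rw [← ofReal_measureReal]
  exact ENNReal.ofReal_le_ofReal (by linarith)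

theorem stmt_6_general {N n : ℕ} (v : Fin N → ℝ) {δ : ℝ} (hN : 14 ≤ N) (hn : 1 ≤ n) (hnN : n ≤ N)
    (hδ0 : 0 < δ) (hδ1 : δ < 1) (hlog : (Real.log (N / δ)) ^ 3 ≤ N)
    {Q : Matrix (Fin n) (Fin n) ℝ} (hQ : Qᵀ * Q = 1) :
    ENNReal.ofReal (1 - δ) ≤
      (iidGaussVec N (n - 1) ((N : NNReal))⁻¹)
        {B | ∀ u : Fin n → ℝ, IsLeadingEigen (specMat (gaussBasis v B * Q)) u →
          ∃ s : ℝ, (s = 1 ∨ s = -1) ∧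
            |lpNorm 4 v ^ 4 - 3 / N| * eucNorm (s • (gaussBasis v B * Q).mulVec u - v) ≤
              54000000 * etaBound 1 N n v δ * (eucNorm v + 1)} := by
  obtain ⟨m, rfl⟩ := Nat.exists_eq_add_of_le' hn
  have hNpos : 0 < N := by linarith
  have hL := one_le_log_div hN hδ0 hδ1
  have hfail := (GaussBasisScales.ofLog m v hNpos hL hlog).measureReal_compl_norm_specMat_sub_le
    hδ0 hδ1 hnN hN (exp_neg_sq_sqrt_log_div (by positivity) hδ0 (zero_le_one.trans hL))
  refine ofReal_one_sub_le_measure (fun B hB u hu ↦ ?_) hfail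
  obtain ⟨s, hs, hle⟩ := exists_sign_mul_eucNorm_gaussBasis_sub_le hQ hB.1 hB.2 hu
  refine ⟨s, hs, ?_⟩
  rw [lpNorm_four_pow, etaBound_one_eq v hNpos hL hlog]
  exact hle.trans_eq (by dsimp only [GaussBasisScales.ofLog]; ring)

/-- Theorem on ℓ₂ estimation from a Gaussian basis: in the Gaussian-basis
model `Ỹ = YQ`, with `M̃` the spectral matrix of `Ỹ` and `ũ` its unit leading eigenvector,
there are a universal constant `C₀ > 0` (defining `η`), a universal constant `C > 0` and an
absolute constant `N₀` such that for any `δ ∈ (0,1)` with `N ≥ log⁷(N/δ)`, with probability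
at least `1 - δ`, up to a sign `s ∈ {±1}`,
`|‖v‖₄⁴ - 3/N| · ‖s Ỹũ - v‖ ≤ C η (‖v‖ + 1)`. -/
theorem stmt_6 :
    ∃ C₀ : ℝ, 0 < C₀ ∧ ∃ C : ℝ, 0 < C ∧ ∃ N₀ : ℕ,
      ∀ (N n : ℕ) (v : Fin N → ℝ) (δ : ℝ), N₀ ≤ N → 1 ≤ n → n ≤ N → 0 < δ → δ < 1 →
        (Real.log (N / δ)) ^ 7 ≤ N →
        ∀ Q : Matrix (Fin n) (Fin n) ℝ, Qᵀ * Q = 1 →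
        ENNReal.ofReal (1 - δ) ≤
          (iidGaussVec N (n - 1) ((N : NNReal))⁻¹)
            {B | ∀ u : Fin n → ℝ, IsLeadingEigen (specMat (gaussBasis v B * Q)) u →
              ∃ s : ℝ, (s = 1 ∨ s = -1) ∧
                |lpNorm 4 v ^ 4 - 3 / N|
                    * eucNorm (s • (gaussBasis v B * Q).mulVec u - v)
                  ≤ C * etaBound C₀ N n v δ * (eucNorm v + 1)} := by
  refine ⟨1, one_pos, 54000000, by norm_num, 14, fun N n v δ hN hn hnN hδ0 hδ1 hlog Q hQ ↦ ?_⟩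
  have hpow := pow_le_pow_right₀ (one_le_log_div hN hδ0 hδ1) (by norm_num : 3 ≤ 7)
  exact stmt_6_general v hN hn hnN hδ0 hδ1 (hpow.trans hlog) hQ
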